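/- arXiv:2211.09629 — 6 statements merged into one kernel-verified Lean document; each statement's English description precedes it below -/
import Mathlib

section
/- Let a₁, b₁, a₂, b₂, a₃, b₃ be real numbers and let P(X) = X³ + (a₁+ib₁)X² + (a₂+ib₂)X + (a₃+ib₃) be a cubic polynomial with complex coefficients. Then all three roots of P have strictly positive imaginary part if and only if the following three conditions hold: −Δ₂ > 0, Δ₄ > 0 and −Δ₆ > 0, where Δ₂ = det [[1, a₁],[0, b₁]], Δ₄ = det [[1, a₁, a₂, a₃],[0, b₁, b₂, b₃],[0, 1, a₁, a₂],[0, 0, b₁, b₂]], and Δ₆ = det [[1, a₁, a₂, a₃, 0, 0],[0, b₁, b₂, b₃, 0, 0],[0, 1, a₁, a₂, a₃, 0],[0, 0, b₁, b₂, b₃, 0],[0, 0, 1, a₁, a₂, a₃],[0, 0, 0, b₁, b₂, b₃]]. -/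
open Polynomial

/-!
Write `P = A + iB` with `A`, `B` real. The Bezoutian `(B(x)A(y) - A(x)B(y)) / (x - y)` is a real
symmetric form whose leading principal minors are the three signed determinants of the criterion.
Removing the roots `zₖ` of `P` one at a time by means of the identity
`(x - z)(y - conj z) - (x - conj z)(y - z) = 2i Im z (x - y)` rewrites it as
`∑ₖ Im zₖ · fₖ(x) * conj (fₖ(conj y))`, where `fₖ` has the roots `zⱼ` for `j < k` and `conj zⱼ`
for `j > k`. The `fₖ` are linearly independent when no `zⱼ` is the conjugate of a later root, which
holds if all `Im zₖ` are positive, and which is forced if the form is nondegenerate. So positive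
definiteness of the form amounts to `Im zₖ > 0` for all `k` (Hermite), and it is detected by the
leading minors (Sylvester).
-/

section Sylvester

open Matrix
open scoped ComplexOrder

/-- The leading principal minor of order `k + 1` of a square matrix; the shift by one makes
`k : Fin n` enumerate the nonempty leading blocks. -/
def leadingMinor {n : ℕ} {R : Type*} [CommRing R] (A : Matrix (Fin n) (Fin n) R) (k : Fin n) : R :=
  (A.submatrix (Fin.castLE k.isLt) (Fin.castLE k.isLt)).det

theorem leadingMinor_last {n : ℕ} {R : Type*} [CommRing R]
    (A : Matrix (Fin (n + 1)) (Fin (n + 1)) R) : leadingMinor A (Fin.last n) = A.det :=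
  rfl

theorem leadingMinor_castSucc {n : ℕ} {R : Type*} [CommRing R]
    (A : Matrix (Fin (n + 1)) (Fin (n + 1)) R) (k : Fin n) :
    leadingMinor A k.castSucc = leadingMinor (A.submatrix Fin.castSucc Fin.castSucc) k :=
  rfl

theorem leadingMinor_map {n : ℕ} {R S : Type*} [CommRing R] [CommRing S] (f : R →+* S)
    (A : Matrix (Fin n) (Fin n) R) (k : Fin n) :
    leadingMinor (A.map f) k = f (leadingMinor A k) :=
  (f.map_det _).symm

variable {𝕜 : Type*} [RCLike 𝕜]

theorem posDef_fromBlocks_of_det_pos {m ι : Type*} [Fintype m] [DecidableEq m] [DecidableEq ι]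
    [Unique ι] {A : Matrix m m 𝕜} {B : Matrix m ι 𝕜} {D : Matrix ι ι 𝕜} (hA : A.PosDef)
    (hdet : 0 < (fromBlocks A B Bᴴ D).det) : (fromBlocks A B Bᴴ D).PosDef := by
  let := hA.isUnit.invertible
  set S := D - Bᴴ * A⁻¹ * B with hS
  have hS_pos : 0 < S default default := by
    rw [det_fromBlocks₁₁, invOf_eq_nonsing_inv, ← hS, det_unique S] at hdet
    exact pos_of_mul_pos_right hdet hA.det_pos.le
  have hS_diag : S = diagonal fun _ => S default default := by
    ext i j
    rw [Subsingleton.elim i default, Subsingleton.elim j default, diagonal_apply_eq]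
  have hS_posSemidef : S.PosSemidef := by
    rw [hS_diag]
    exact .diagonal fun _ => hS_pos.le
  exact ((hA.fromBlocks₁₁ B D).2 hS_posSemidef).posDef_iff_det_ne_zero.2 hdet.ne'

theorem posDef_iff_submatrix_castSucc_and_det_pos {n : ℕ}
    {A : Matrix (Fin (n + 1)) (Fin (n + 1)) 𝕜} (hA : A.IsHermitian) :
    A.PosDef ↔ (A.submatrix Fin.castSucc Fin.castSucc).PosDef ∧ 0 < A.det := by
  refine ⟨fun h => ⟨h.submatrix (Fin.castSucc_injective n), h.det_pos⟩, fun ⟨hsub, hdet⟩ => ?_⟩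
  let e : Fin n ⊕ Fin 1 ≃ Fin (n + 1) := finSumFinEquiv
  let M := A.submatrix e e
  have hM : M = fromBlocks M.toBlocks₁₁ M.toBlocks₁₂ M.toBlocks₁₂ᴴ M.toBlocks₂₂ := by
    have h₂₁ : M.toBlocks₂₁ = M.toBlocks₁₂ᴴ := by
      ext i j
      exact (hA.apply _ _).symm
    rw [← h₂₁, fromBlocks_toBlocks]
  have hM_posDef : M.PosDef := by
    rw [hM]
    refine posDef_fromBlocks_of_det_pos hsub ?_
    rwa [← hM, det_submatrix_equiv_self]
  simpa [M] using hM_posDef.submatrix e.symm.injective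

theorem posDef_iff_leadingMinor_pos {n : ℕ} {A : Matrix (Fin n) (Fin n) 𝕜} (hA : A.IsHermitian) :
    A.PosDef ↔ ∀ k, 0 < leadingMinor A k := by
  induction n with
  | zero => exact iff_of_true ⟨hA, fun x hx => (hx (Subsingleton.elim x 0)).elim⟩ fun k => k.elim0
  | succ n ih =>
    rw [posDef_iff_submatrix_castSucc_and_det_pos hA, ih (hA.submatrix _), Fin.forall_fin_succ']
    simp only [leadingMinor_castSucc, leadingMinor_last]

theorem posDef_map_ofReal_iff_leadingMinor_pos {n : ℕ} {A : Matrix (Fin n) (Fin n) ℝ}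
    (hA : A.IsSymm) : (A.map Complex.ofRealHom).PosDef ↔ ∀ k, 0 < leadingMinor A k := by
  have hA' : (A.map Complex.ofRealHom).IsHermitian := by
    ext i j
    simp [hA.apply i j]
  simp only [posDef_iff_leadingMinor_pos hA', leadingMinor_map, Complex.ofRealHom_eq_coe,
    Complex.zero_lt_real]

end Sylvester

section Hermite

open Matrix
open scoped ComplexOrder ComplexConjugate

/-- The matrix, in the basis `X², X, 1`, of the Bezoutian `(B(x)A(y) - A(x)B(y)) / (x - y)` of
`A = X³ + a₁X² + a₂X + a₃` and `B = b₁X² + b₂X + b₃`. -/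
def hermiteMatrix {R : Type*} [CommRing R] (a₁ b₁ a₂ b₂ a₃ b₃ : R) : Matrix (Fin 3) (Fin 3) R :=
  -!![b₁, b₂, b₃;
      b₂, b₃ + a₁ * b₂ - a₂ * b₁, a₁ * b₃ - a₃ * b₁;
      b₃, a₁ * b₃ - a₃ * b₁, a₂ * b₃ - a₃ * b₂]

theorem isSymm_hermiteMatrix {R : Type*} [CommRing R] (a₁ b₁ a₂ b₂ a₃ b₃ : R) :
    (hermiteMatrix a₁ b₁ a₂ b₂ a₃ b₃).IsSymm := by
  ext i j
  fin_cases i <;> fin_cases j <;> rfl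

theorem leadingMinor_hermiteMatrix_zero {R : Type*} [CommRing R] (a₁ b₁ a₂ b₂ a₃ b₃ : R) :
    leadingMinor (hermiteMatrix a₁ b₁ a₂ b₂ a₃ b₃) 0 = -det !![1, a₁; 0, b₁] := by
  simp [leadingMinor, hermiteMatrix]

theorem leadingMinor_hermiteMatrix_one {R : Type*} [CommRing R] (a₁ b₁ a₂ b₂ a₃ b₃ : R) :
    leadingMinor (hermiteMatrix a₁ b₁ a₂ b₂ a₃ b₃) 1 =
      det !![1, a₁, a₂, a₃;
             0, b₁, b₂, b₃;
             0, 1, a₁, a₂;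
             0, 0, b₁, b₂] := by
  have hminor : leadingMinor (hermiteMatrix a₁ b₁ a₂ b₂ a₃ b₃) 1 =
      b₁ * (b₃ + a₁ * b₂ - a₂ * b₁) - b₂ ^ 2 := by
    refine (det_fin_two _).trans ?_
    change -b₁ * -(b₃ + a₁ * b₂ - a₂ * b₁) - -b₂ * -b₂ = _
    ring
  rw [hminor]
  simp [det_succ_column_zero, Fin.sum_univ_succ, Fin.succAbove]
  ring

theorem leadingMinor_hermiteMatrix_two {R : Type*} [CommRing R] (a₁ b₁ a₂ b₂ a₃ b₃ : R) :
    leadingMinor (hermiteMatrix a₁ b₁ a₂ b₂ a₃ b₃) 2 =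
      -det !![1, a₁, a₂, a₃, 0, 0;
              0, b₁, b₂, b₃, 0, 0;
              0, 1, a₁, a₂, a₃, 0;
              0, 0, b₁, b₂, b₃, 0;
              0, 0, 1, a₁, a₂, a₃;
              0, 0, 0, b₁, b₂, b₃] := by
  refine (leadingMinor_last _).trans ?_
  simp [hermiteMatrix, det_succ_column_zero, Fin.sum_univ_succ, Fin.succAbove]
  ring

/-- The matrix whose rows are the coefficients, in the basis `X², X, 1`, of
`(X - conj z₂)(X - conj z₃)`, `(X - z₁)(X - conj z₃)` and `(X - z₁)(X - z₂)`; congruence by it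
diagonalizes the Hermite matrix of the cubic with roots `z₁, z₂, z₃`. -/
def hermiteFactor (z₁ z₂ z₃ : ℂ) : Matrix (Fin 3) (Fin 3) ℂ :=
  !![1, -(conj z₂ + conj z₃), conj z₂ * conj z₃;
     1, -(z₁ + conj z₃), z₁ * conj z₃;
     1, -(z₁ + z₂), z₁ * z₂]

theorem det_hermiteFactor (z₁ z₂ z₃ : ℂ) :
    (hermiteFactor z₁ z₂ z₃).det = -((z₁ - conj z₂) * (z₁ - conj z₃) * (z₂ - conj z₃)) := by
  rw [hermiteFactor, det_fin_three]
  simp only [of_apply, cons_val', cons_val_zero, cons_val_fin_one, cons_val_one, cons_val]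
  ring

theorem sub_conj_ne_zero_of_im_pos {z w : ℂ} (hz : 0 < z.im) (hw : 0 < w.im) : z - conj w ≠ 0 := by
  intro h
  have him := congrArg Complex.im h
  rw [Complex.sub_im, Complex.conj_im, Complex.zero_im] at him
  linarith

theorem isUnit_hermiteFactor {z₁ z₂ z₃ : ℂ} (h₁ : 0 < z₁.im) (h₂ : 0 < z₂.im) (h₃ : 0 < z₃.im) :
    IsUnit (hermiteFactor z₁ z₂ z₃) := by
  rw [isUnit_iff_isUnit_det, det_hermiteFactor, isUnit_iff_ne_zero]
  exact neg_ne_zero.2 <| mul_ne_zero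
    (mul_ne_zero (sub_conj_ne_zero_of_im_pos h₁ h₂) (sub_conj_ne_zero_of_im_pos h₁ h₃))
    (sub_conj_ne_zero_of_im_pos h₂ h₃)

theorem hermiteMatrix_eq_star_mul_diagonal_mul (z₁ z₂ z₃ : ℂ) {c₁ c₂ c₃ : ℂ}
    (hc₁ : c₁ = -(z₁ + z₂ + z₃)) (hc₂ : c₂ = z₁ * z₂ + z₁ * z₃ + z₂ * z₃)
    (hc₃ : c₃ = -(z₁ * z₂ * z₃)) :
    (hermiteMatrix c₁.re c₁.im c₂.re c₂.im c₃.re c₃.im).map Complex.ofRealHom =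
      star (hermiteFactor z₁ z₂ z₃) * diagonal (fun k => ((![z₁, z₂, z₃] k).im : ℂ)) *
        hermiteFactor z₁ z₂ z₃ := by
  subst hc₁ hc₂ hc₃
  ext i j
  fin_cases i <;> fin_cases j <;> apply Complex.ext <;>
    simp [hermiteMatrix, hermiteFactor, mul_apply, Fin.sum_univ_succ] <;> ring

theorem posDef_hermiteMatrix_iff_im_pos (z₁ z₂ z₃ : ℂ) {c₁ c₂ c₃ : ℂ}
    (hc₁ : c₁ = -(z₁ + z₂ + z₃)) (hc₂ : c₂ = z₁ * z₂ + z₁ * z₃ + z₂ * z₃)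
    (hc₃ : c₃ = -(z₁ * z₂ * z₃)) :
    ((hermiteMatrix c₁.re c₁.im c₂.re c₂.im c₃.re c₃.im).map Complex.ofRealHom).PosDef ↔
      0 < z₁.im ∧ 0 < z₂.im ∧ 0 < z₃.im := by
  have hdiag : (diagonal fun k => ((![z₁, z₂, z₃] k).im : ℂ)).PosDef ↔
      0 < z₁.im ∧ 0 < z₂.im ∧ 0 < z₃.im := by
    simp [Fin.forall_fin_succ]
  rw [hermiteMatrix_eq_star_mul_diagonal_mul z₁ z₂ z₃ hc₁ hc₂ hc₃]
  constructor
  · intro h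
    have hF : IsUnit (hermiteFactor z₁ z₂ z₃) := isUnit_of_mul_isUnit_right h.isUnit
    exact hdiag.1 (hF.posDef_star_left_conjugate_iff.1 h)
  · intro h
    have hF : IsUnit (hermiteFactor z₁ z₂ z₃) := isUnit_hermiteFactor h.1 h.2.1 h.2.2
    exact hF.posDef_star_left_conjugate_iff.2 (hdiag.2 h)

end Hermite

theorem exists_vieta_and_isRoot_cubic_iff {K : Type*} [Field K] [IsAlgClosed K] (c₁ c₂ c₃ : K) :
    ∃ z₁ z₂ z₃ : K, c₁ = -(z₁ + z₂ + z₃) ∧ c₂ = z₁ * z₂ + z₁ * z₃ + z₂ * z₃ ∧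
      c₃ = -(z₁ * z₂ * z₃) ∧
      ∀ z, (X ^ 3 + C c₁ * X ^ 2 + C c₂ * X + C c₃).IsRoot z ↔ z = z₁ ∨ z = z₂ ∨ z = z₃ := by
  let P : Cubic K := ⟨1, c₁, c₂, c₃⟩
  have hP : P.a ≠ 0 := one_ne_zero
  obtain ⟨z₁, z₂, z₃, hroots⟩ :=
    (Cubic.splits_iff_roots_eq_three (φ := RingHom.id K) hP).1 (IsAlgClosed.splits _)
  refine ⟨z₁, z₂, z₃, by simpa [P] using Cubic.b_eq_three_roots hP hroots,
    by simpa [P] using Cubic.c_eq_three_roots hP hroots,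
    by simpa [P] using Cubic.d_eq_three_roots hP hroots, fun z => ?_⟩
  have hfactor : X ^ 3 + C c₁ * X ^ 2 + C c₂ * X + C c₃ = (X - C z₁) * (X - C z₂) * (X - C z₃) := by
    simpa [P, Cubic.toPoly, Cubic.map] using Cubic.eq_prod_three_roots hP hroots
  simp only [hfactor, root_mul, root_X_sub_C, eq_comm, or_assoc]

/-- **Routh–Hurwitz criterion** for monic cubic polynomials with complex
coefficients: all three roots of
`P(X) = X³ + (a₁+ib₁)X² + (a₂+ib₂)X + (a₃+ib₃)` have strictly positive
imaginary part if and only if `−Δ₂ > 0`, `Δ₄ > 0` and `−Δ₆ > 0`. -/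
theorem routh_hurwitz_cubic (a₁ b₁ a₂ b₂ a₃ b₃ : ℝ) :
    (∀ z : ℂ,
        (X ^ 3 + C ((a₁ : ℂ) + (b₁ : ℂ) * Complex.I) * X ^ 2
            + C ((a₂ : ℂ) + (b₂ : ℂ) * Complex.I) * X
            + C ((a₃ : ℂ) + (b₃ : ℂ) * Complex.I)).IsRoot z → 0 < z.im) ↔
      (0 < -Matrix.det !![(1 : ℝ), a₁; 0, b₁] ∧
        0 < Matrix.det !![(1 : ℝ), a₁, a₂, a₃;
                          0, b₁, b₂, b₃;
                          0, 1, a₁, a₂;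
                          0, 0, b₁, b₂] ∧
        0 < -Matrix.det !![(1 : ℝ), a₁, a₂, a₃, 0, 0;
                           0, b₁, b₂, b₃, 0, 0;
                           0, 1, a₁, a₂, a₃, 0;
                           0, 0, b₁, b₂, b₃, 0;
                           0, 0, 1, a₁, a₂, a₃;
                           0, 0, 0, b₁, b₂, b₃]) := by
  obtain ⟨z₁, z₂, z₃, hc₁, hc₂, hc₃, hroot⟩ :=
    exists_vieta_and_isRoot_cubic_iff (⟨a₁, b₁⟩ : ℂ) ⟨a₂, b₂⟩ ⟨a₃, b₃⟩
  simp only [← Complex.mk_eq_add_mul_I, hroot, forall_eq_or_imp, forall_eq]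
  rw [← posDef_hermiteMatrix_iff_im_pos z₁ z₂ z₃ hc₁ hc₂ hc₃,
    posDef_map_ofReal_iff_leadingMinor_pos (isSymm_hermiteMatrix ..)]
  simp only [Fin.forall_fin_succ, Fin.succ_zero_eq_one, Fin.succ_one_eq_two, IsEmpty.forall_iff,
    and_true, leadingMinor_hermiteMatrix_zero, leadingMinor_hermiteMatrix_one,
    leadingMinor_hermiteMatrix_two]
end

section
/- Fix positive reals α, h̄, c̄, ρ̄_s, s, e, m, T = tanθ, and assume the creeping constant K is strictly positive. Then there exists a constant γ > 0, depending on these parameters but independent of n, such that for every n > 0: the linearized system (with exponent n in the matrix A) is spectrally stable at every frequency (ξ,η) ∈ ℝ² \ {(0,0)} if and only if K ≥ α m h̄ c̄ / ρ̄_s and n < γ. -/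
/-- The Fourier symbol `A(ξ,η) = A₀ + iξ·A₁ − (ξ²+η²)·A₂` of the linearized
landscape evolution system about the constant state `(h̄, c̄, 0)`, with
`a = s·ρ̄ₛ/(e·h̄)` and slope parameter `T = tan θ`. -/
noncomputable def landA (α hb cb ρs s e m n T K : ℝ) (ξ η : ℝ) :
    Matrix (Fin 3) (Fin 3) ℂ :=
  ((!![0, 0, 0;
       (s * ρs / (e * hb)) * m * cb / hb, -(s * ρs / (e * hb)), 0;
       -((s * ρs / (e * hb)) * m * cb / ρs), (s * ρs / (e * hb)) * hb / ρs, 0] :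
      Matrix (Fin 3) (Fin 3) ℝ).map Complex.ofReal)
  + (Complex.I * (ξ : ℂ)) •
    ((!![-T, 0, 0;
         -(α * (s * ρs / (e * hb)) * n * cb / T), -T,
           -(α * (s * ρs / (e * hb)) * n * cb / T);
         α * (s * ρs / (e * hb)) * n * hb * cb / (ρs * T), 0,
           α * (s * ρs / (e * hb)) * n * hb * cb / (ρs * T)] :
        Matrix (Fin 3) (Fin 3) ℝ).map Complex.ofReal)
  - (((ξ ^ 2 + η ^ 2 : ℝ) : ℂ)) •
    ((!![α * hb, 0, α * hb; 0, 0, 0; 0, 0, K] :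
        Matrix (Fin 3) (Fin 3) ℝ).map Complex.ofReal)

/-- Spectral stability: every eigenvalue (root of the characteristic
polynomial) has strictly negative real part. -/
def SpectrallyStable (A : Matrix (Fin 3) (Fin 3) ℂ) : Prop :=
  ∀ z : ℂ, A.charpoly.IsRoot z → z.re < 0

/-!
Since the spectrum of a matrix depends continuously on the matrix, stability along a connected
family of symbols can only be lost through an imaginary eigenvalue. Eliminating `ξ` from the real
and imaginary parts of the characteristic equation turns such a crossing into one equation and one
inequality in `q = ξ² + η²` and the rescaled squared frequency `V` in the frame moving with the
flow.

Write `H = α h̄`, `D = a m c̄ / ρ̄ₛ` and `b = α a n c̄ h̄ / (T ρ̄ₛ)`. If `H D ≤ a K`, the crossings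
persist as `b` increases, none occurs at `b = 0`, and those with bounded `b` form a compact set, so
there is a least `b` with a crossing; below it, the symbol is connected to the stable factorised one
at `D = b = 0`.

If `H D > a K`, put `q = M ξ²` with `M` large and let `ξ → 0`. By Gauss–Lucas, a characteristic
polynomial `p` with all roots in the open left half-plane satisfies `Re (p'(0) / p(0)) > 0`, and
this fails for small `ξ`.
-/

open Polynomial Set Filter Topology

section Spectrum

variable {ι : Type*} [Fintype ι] [DecidableEq ι]

lemma pow_natDegree_le_norm_eval {𝕜 : Type*} [NormedField 𝕜] [IsAlgClosed 𝕜] {p : 𝕜[X]}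
    (hp : p.Monic) {z : 𝕜} {δ : ℝ} (hδ : 0 ≤ δ) (hroots : ∀ r, p.IsRoot r → δ ≤ ‖z - r‖) :
    δ ^ p.natDegree ≤ ‖p.eval z‖ := by
  have hsplit := IsAlgClosed.splits p
  calc δ ^ p.natDegree = (p.roots.map fun _ ↦ δ).prod := by
        rw [Multiset.map_const', Multiset.prod_replicate, ← hsplit.natDegree_eq_card_roots]
    _ ≤ (p.roots.map fun r ↦ ‖z - r‖).prod :=
        Multiset.prod_map_le_prod_map₀ _ _ (fun _ _ ↦ hδ) fun r hr ↦
          hroots r (isRoot_of_mem_roots hr)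
    _ = ‖p.eval z‖ := by
        rw [hsplit.eval_eq_prod_roots_of_monic hp]
        exact (Multiset.prod_hom' p.roots (normHom : 𝕜 →*₀ ℝ) fun r ↦ z - r)

lemma lowerHemicontinuous_matrix_spectrum {𝕜 : Type*} [NormedField 𝕜] [IsAlgClosed 𝕜] :
    LowerHemicontinuous (spectrum 𝕜 : Matrix ι ι 𝕜 → Set 𝕜) := by
  rw [lowerHemicontinuous_iff_isOpen_inter_nonempty]
  refine fun U hU ↦ isOpen_iff_mem_nhds.mpr ?_
  rintro A ⟨z, hzA, hzU⟩
  obtain ⟨δ, hδ, hball⟩ := Metric.isOpen_iff.mp hU z hzU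
  have hcont : Continuous fun B : Matrix ι ι 𝕜 ↦ ‖B.charpoly.eval z‖ := by
    simp only [Matrix.eval_charpoly]
    fun_prop
  have hsmall : ‖A.charpoly.eval z‖ < δ ^ Fintype.card ι := by
    rw [(Matrix.mem_spectrum_iff_isRoot_charpoly.mp hzA).eq_zero, norm_zero]
    positivity
  filter_upwards [hcont.continuousAt.eventually_lt continuousAt_const hsmall] with B hB
  by_contra hfar
  refine hB.not_ge ?_
  rw [← B.charpoly_natDegree_eq_dim]
  refine pow_natDegree_le_norm_eval B.charpoly_monic hδ.le fun r hr ↦ ?_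
  by_contra! hr'
  exact hfar ⟨r, Matrix.mem_spectrum_iff_isRoot_charpoly.mpr hr,
    hball (by rwa [Metric.mem_ball, dist_comm, dist_eq_norm])⟩

open scoped Matrix.Norms.Operator in
lemma upperHemicontinuous_matrix_spectrum {𝕜 : Type*} [NormedField 𝕜] [ProperSpace 𝕜] :
    UpperHemicontinuous (spectrum 𝕜 : Matrix ι ι 𝕜 → Set 𝕜) :=
  -- `Matrix` carries no `CompleteSpace` instance for the uniformity of its operator norm.
  @upperHemicontinuous_spectrum 𝕜 (Matrix ι ι 𝕜) _ _ _ _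
    (inferInstanceAs (CompleteSpace (ι → ι → 𝕜)))

lemma forall_subset_of_isPreconnected {X Y : Type*} [TopologicalSpace X] [TopologicalSpace Y]
    {f : X → Set Y} (hupper : UpperHemicontinuous f) (hlower : LowerHemicontinuous f)
    {s : Set X} (hs : IsPreconnected s) {U V : Set Y} (hU : IsOpen U) (hV : IsOpen V)
    (hUV : Disjoint U V) (hcover : ∀ x ∈ s, f x ⊆ U ∪ V) {x₀ : X} (hx₀ : x₀ ∈ s)
    (hfx₀ : f x₀ ⊆ U) : ∀ x ∈ s, f x ⊆ U := by
  have hmeets : ∀ x ∈ s, ¬ f x ⊆ U → (f x ∩ V).Nonempty := by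
    intro x hx hxU
    obtain ⟨y, hy, hyU⟩ := not_subset.mp hxU
    exact ⟨y, hy, (hcover x hx hy).resolve_left hyU⟩
  refine hs.subset_left_of_subset_union
    (upperHemicontinuous_iff_isOpen_preimage_Iic.mp hupper U hU)
    (lowerHemicontinuous_iff_isOpen_inter_nonempty.mp hlower V hV) ?_
    (fun x hx ↦ or_iff_not_imp_left.mpr (hmeets x hx)) ⟨x₀, hx₀, hfx₀⟩
  refine Set.disjoint_left.mpr fun x (hxU : f x ⊆ U) ⟨y, hy, hyV⟩ ↦ ?_
  exact Set.disjoint_left.mp hUV (hxU hy) hyV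

lemma re_derivative_div_eval_pos {p : ℂ[X]} (hp : 0 < p.natDegree) {z : ℂ}
    (hroots : ∀ r, p.IsRoot r → r.re < z.re) : 0 < (p.derivative.eval z / p.eval z).re := by
  have hsplit := IsAlgClosed.splits p
  have hz : p.eval z ≠ 0 := fun h ↦ (hroots z h).false
  have hterm : ∀ r ∈ p.roots, 0 < (1 / (z - r)).re := by
    intro r hr
    have hre : 0 < (z - r).re := by
      simpa using hroots r (isRoot_of_mem_roots hr)
    rw [one_div, Complex.inv_re]
    exact div_pos hre (Complex.normSq_pos.mpr fun h ↦ hre.ne' (by simp [h]))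
  have hne : p.roots ≠ 0 := by
    rw [← Multiset.card_pos, ← hsplit.natDegree_eq_card_roots]
    exact hp
  rw [hsplit.eval_derivative_div_eval_of_ne_zero hz]
  refine Multiset.sum_induction_nonempty (fun w : ℂ ↦ 0 < w.re) (fun _ _ ↦ add_pos)
    (by simpa using hne) fun w hw ↦ ?_
  obtain ⟨r, hr, rfl⟩ := Multiset.mem_map.mp hw
  exact hterm r hr

end Spectrum

lemma forall_sq_add_sq_iff {P : ℝ → ℝ → Prop} :
    (∀ ξ η : ℝ, (ξ, η) ≠ (0, 0) → P (ξ ^ 2 + η ^ 2) ξ) ↔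
      ∀ q ξ : ℝ, 0 < q → ξ ^ 2 ≤ q → P q ξ := by
  constructor
  · intro h q ξ hq hξ
    have hη : ξ ^ 2 + √(q - ξ ^ 2) ^ 2 = q := by
      rw [Real.sq_sqrt (sub_nonneg.mpr hξ), add_sub_cancel]
    rw [← hη]
    refine h ξ _ fun h0 ↦ hq.ne ?_
    obtain ⟨hξ0, hη0⟩ := Prod.mk.inj h0
    rw [← hη, hη0, hξ0]
    norm_num
  · intro h ξ η hne
    refine h _ ξ ?_ (le_add_of_nonneg_right (sq_nonneg η))
    by_contra! hle
    have hξ : ξ = 0 := by nlinarith [sq_nonneg ξ, sq_nonneg η]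
    have hη : η = 0 := by nlinarith [sq_nonneg ξ, sq_nonneg η]
    exact hne (by rw [hξ, hη])

lemma spectrallyStable_iff_spectrum_subset {A : Matrix (Fin 3) (Fin 3) ℂ} :
    SpectrallyStable A ↔ spectrum ℂ A ⊆ {z | z.re < 0} :=
  forall_congr' fun _ ↦ imp_congr_left Matrix.mem_spectrum_iff_isRoot_charpoly.symm

lemma forall_spectrallyStable_of_isPreconnected {X : Type*} [TopologicalSpace X]
    {A : X → Matrix (Fin 3) (Fin 3) ℂ} (hA : Continuous A) {s : Set X} (hs : IsPreconnected s)
    {x₀ : X} (hx₀ : x₀ ∈ s) (hstable : SpectrallyStable (A x₀))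
    (hcross : ∀ x ∈ s, ∀ z, (A x).charpoly.IsRoot z → z.re ≠ 0) :
    ∀ x ∈ s, SpectrallyStable (A x) := by
  simp only [spectrallyStable_iff_spectrum_subset] at hstable ⊢
  refine forall_subset_of_isPreconnected (upperHemicontinuous_matrix_spectrum.comp hA)
    (lowerHemicontinuous_matrix_spectrum.comp hA) hs
    (isOpen_lt Complex.continuous_re continuous_const)
    (isOpen_lt continuous_const Complex.continuous_re : IsOpen {z : ℂ | 0 < z.re})
    (Set.disjoint_left.mpr fun z (hneg : z.re < 0) ↦ hneg.not_gt) (fun x hx z hz ↦ ?_) hx₀ hstable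
  exact (hcross x hx z (Matrix.mem_spectrum_iff_isRoot_charpoly.mp hz)).lt_or_gt

/-- The landscape symbol after rescaling the concentration by `h̄ / ρ̄ₛ`, in the parameters
`H = α h̄`, `D = a m c̄ / ρ̄ₛ`, `b = α a n c̄ h̄ / (T ρ̄ₛ)` and `q = ξ² + η²`. -/
noncomputable def reducedSymbol (H a K T D b q ξ : ℝ) : Matrix (Fin 3) (Fin 3) ℂ :=
  !![-(q * H) - Complex.I * ξ * T, 0, -(q * H);
     D - Complex.I * ξ * b, -a - Complex.I * ξ * T, -(Complex.I * ξ * b);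
     Complex.I * ξ * b - D, a, Complex.I * ξ * b - q * K]

lemma charpoly_landA {hb ρs e T : ℝ} (hhb : hb ≠ 0) (hρs : ρs ≠ 0) (he : e ≠ 0) (hT : T ≠ 0)
    (α cb s m n K ξ η : ℝ) :
    (landA α hb cb ρs s e m n T K ξ η).charpoly =
      (reducedSymbol (α * hb) (s * ρs / (e * hb)) K T (s * ρs / (e * hb) * m * cb / ρs)
        (α * (s * ρs / (e * hb)) * n * cb * hb / (T * ρs)) (ξ ^ 2 + η ^ 2) ξ).charpoly := by
  have hhb' : (hb : ℂ) ≠ 0 := by exact_mod_cast hhb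
  have hρs' : (ρs : ℂ) ≠ 0 := by exact_mod_cast hρs
  have he' : (e : ℂ) ≠ 0 := by exact_mod_cast he
  have hT' : (T : ℂ) ≠ 0 := by exact_mod_cast hT
  refine Polynomial.funext fun z ↦ ?_
  simp only [Matrix.eval_charpoly, Matrix.det_fin_three, landA, reducedSymbol,
    Matrix.scalar_apply, Matrix.sub_apply, Matrix.add_apply, Matrix.smul_apply, Matrix.map_apply,
    Matrix.diagonal_apply, Fin.reduceEq, reduceIte, Matrix.of_apply, Matrix.cons_val, smul_eq_mul]
  push_cast
  field_simp
  ring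

namespace reducedSymbol

lemma continuous_coupling (H a K T q ξ : ℝ) :
    Continuous fun x : ℝ × ℝ ↦ reducedSymbol H a K T x.1 x.2 q ξ := by
  refine continuous_matrix fun i j ↦ ?_
  fin_cases i <;> fin_cases j <;>
    simp only [reducedSymbol, Fin.zero_eta, Fin.mk_one, Fin.reduceFinMk, Matrix.of_apply,
      Matrix.cons_val] <;> fun_prop

lemma eval_charpoly (H a K T D b q ξ : ℝ) (z : ℂ) :
    (reducedSymbol H a K T D b q ξ).charpoly.eval z =
      (z + Complex.I * ξ * T + q * H) * (z + Complex.I * ξ * T + a) * (z + q * K)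
        - Complex.I * ξ * b * (z + Complex.I * ξ * T) ^ 2
        - q * H * D * (z + Complex.I * ξ * T) := by
  rw [Matrix.eval_charpoly, Matrix.det_fin_three]
  simp only [reducedSymbol, Matrix.scalar_apply, Matrix.sub_apply, Matrix.diagonal_apply,
    Fin.reduceEq, reduceIte, Matrix.of_apply, Matrix.cons_val]
  ring

lemma eval_derivative_charpoly (H a K T D b q ξ : ℝ) (z : ℂ) :
    (reducedSymbol H a K T D b q ξ).charpoly.derivative.eval z =
      (2 * (z + Complex.I * ξ * T) + q * H + a) * (z + q * K)
        + (z + Complex.I * ξ * T + q * H) * (z + Complex.I * ξ * T + a)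
        - 2 * Complex.I * ξ * b * (z + Complex.I * ξ * T) - q * H * D := by
  have hcharpoly : (reducedSymbol H a K T D b q ξ).charpoly =
      (X + C (Complex.I * ξ * T + q * H)) * (X + C (Complex.I * ξ * T + a)) * (X + C (q * K : ℂ))
        - C (Complex.I * ξ * b) * (X + C (Complex.I * ξ * T)) ^ 2
        - C (q * H * D : ℂ) * (X + C (Complex.I * ξ * T)) := by
    refine Polynomial.funext fun w ↦ ?_
    rw [eval_charpoly]
    simp only [eval_add, eval_sub, eval_mul, eval_pow, eval_X, eval_C]
    ring
  rw [hcharpoly]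
  simp only [derivative_sub, derivative_mul, derivative_pow, derivative_add, derivative_X,
    derivative_C, eval_add, eval_sub, eval_mul, eval_pow, eval_X, eval_C, eval_zero,
    eval_one]
  push_cast
  ring

lemma isRoot_charpoly_axis_iff (H a K T D b q ξ ω : ℝ) :
    (reducedSymbol H a K T D b q ξ).charpoly.IsRoot (Complex.I * (ω - ξ * T)) ↔
      q * K * (q * H * a - ω ^ 2) - ω * (q * H + a) * (ω - ξ * T) = 0 ∧
        ω * (q * H + a) * (q * K) + (q * H * a - ω ^ 2) * (ω - ξ * T) + ξ * b * ω ^ 2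
          - ω * (q * H * D) = 0 := by
  have heval : (reducedSymbol H a K T D b q ξ).charpoly.eval (Complex.I * (ω - ξ * T)) =
      ⟨q * K * (q * H * a - ω ^ 2) - ω * (q * H + a) * (ω - ξ * T),
        ω * (q * H + a) * (q * K) + (q * H * a - ω ^ 2) * (ω - ξ * T) + ξ * b * ω ^ 2
          - ω * (q * H * D)⟩ := by
    rw [eval_charpoly, Complex.mk_eq_add_mul_I]
    push_cast
    linear_combination (Complex.I * ω ^ 2 * (ω - ξ * T) + q * K * ω ^ 2
      + ω * (q * H + a) * (ω - ξ * T) - Complex.I * ξ * b * ω ^ 2) * Complex.I_sq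
  rw [IsRoot.def, heval, Complex.ext_iff, Complex.zero_re, Complex.zero_im]

end reducedSymbol

/-- The quantity `-ω ξ T (q H + a) / q` at an imaginary eigenvalue, where `ω` is the frequency in
the frame moving with the flow and `V = ω² / q`. -/
def crossingDrift (H a K q V : ℝ) : ℝ :=
  q * K * (H * a - V) - V * (q * H + a)

/-- The elimination of `ξ` from the equations for an imaginary eigenvalue of `reducedSymbol`: the
symbol at `q` has an eigenvalue on the imaginary axis, of frequency `ω` with `ω² = q V` in the
frame moving with the flow, for some `ξ` subject to `ξ² ≤ q`. -/
structure IsMarginal (H a K T D b q V : ℝ) : Prop where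
  q_pos : 0 < q
  V_pos : 0 < V
  balance : b * V * crossingDrift H a K q V =
    T * (V * (q * H + a) * (K * (q * H + a) - H * D) + q * K * (H * a - V) ^ 2)
  drift_sq_le : crossingDrift H a K q V ^ 2 ≤ T ^ 2 * (q * H + a) ^ 2 * V

section Marginal

variable {H a K T D b q V : ℝ}

lemma antitone_crossingDrift (hH : 0 < H) (ha : 0 < a) (hK : 0 < K) (hq : 0 < q) :
    Antitone (crossingDrift H a K q) := by
  intro V W hVW
  unfold crossingDrift
  gcongr

@[fun_prop]
lemma continuous_crossingDrift {X : Type*} [TopologicalSpace X] {q V : X → ℝ} (hq : Continuous q)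
    (hV : Continuous V) : Continuous fun x ↦ crossingDrift H a K (q x) (V x) := by
  unfold crossingDrift
  fun_prop

lemma exists_crossingDrift_eq_zero (hH : 0 < H) (ha : 0 < a) (hK : 0 < K) (hq : 0 < q) :
    ∃ V, 0 < V ∧ crossingDrift H a K q V = 0 := by
  refine ⟨q * K * (H * a) / (q * K + (q * H + a)), by positivity, ?_⟩
  unfold crossingDrift
  field_simp
  ring

lemma reducedSymbol.isRoot_charpoly_axis_iff_balance {ξ ω : ℝ} (hq : q ≠ 0) (hT : T ≠ 0)
    (hL : q * H + a ≠ 0) (hω : ω ≠ 0) (hωV : ω ^ 2 = q * V) :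
    (reducedSymbol H a K T D b q ξ).charpoly.IsRoot (Complex.I * (ω - ξ * T)) ↔
      q * crossingDrift H a K q V = -(ω * ξ) * T * (q * H + a) ∧
        b * V * crossingDrift H a K q V =
          T * (V * (q * H + a) * (K * (q * H + a) - H * D) + q * K * (H * a - V) ^ 2) := by
  have hreal_iff : q * K * (q * H * a - ω ^ 2) - ω * (q * H + a) * (ω - ξ * T) = 0 ↔
      q * crossingDrift H a K q V = -(ω * ξ) * T * (q * H + a) := by
    unfold crossingDrift
    constructor <;> intro h
    · linear_combination h + (q * K + (q * H + a)) * hωV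
    · linear_combination h - (q * K + (q * H + a)) * hωV
  rw [isRoot_charpoly_axis_iff, hreal_iff]
  refine and_congr_right fun hdrift ↦ ?_
  have hreal := hreal_iff.mpr hdrift
  have hleft : q ^ 2 * (b * V * crossingDrift H a K q V) =
      b * ω ^ 2 * (-(ω * ξ) * T * (q * H + a)) := by
    rw [← hdrift, hωV]
    ring
  have hright : q ^ 2 *
      (T * (V * (q * H + a) * (K * (q * H + a) - H * D) + q * K * (H * a - V) ^ 2)) =
      T * (q * ω ^ 2 * (q * H + a) * (K * (q * H + a) - H * D)
        + q * K * (q * H * a - ω ^ 2) ^ 2) := by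
    rw [hωV]
    ring
  refine Iff.trans ?_ (mul_right_inj' (pow_ne_zero 2 hq))
  rw [hleft, hright, ← mul_right_inj' (mul_ne_zero (mul_ne_zero hT hL) hω)]
  constructor <;> intro h
  · linear_combination -h - T * (q * H * a - ω ^ 2) * hreal
  · linear_combination -h - T * (q * H * a - ω ^ 2) * hreal

lemma isMarginal_of_isRoot_charpoly {ξ : ℝ} (hH : 0 < H) (ha : 0 < a) (hK : 0 < K) (hT : 0 < T)
    (hq : 0 < q) (hξ : ξ ^ 2 ≤ q) {z : ℂ} (hz : (reducedSymbol H a K T D b q ξ).charpoly.IsRoot z)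
    (hre : z.re = 0) : IsMarginal H a K T D b q ((z.im + ξ * T) ^ 2 / q) := by
  obtain ⟨ω, hω⟩ : ∃ ω, ω = z.im + ξ * T := ⟨_, rfl⟩
  have hzω : z = Complex.I * (ω - ξ * T) := by
    apply Complex.ext <;> simp [hre, hω]
  rw [hzω] at hz
  have hω0 : ω ≠ 0 := by
    rintro rfl
    have hreal := (reducedSymbol.isRoot_charpoly_axis_iff ..).mp hz |>.1
    have : 0 < q * K * (q * H * a) := by positivity
    linarith
  have hωV : ω ^ 2 = q * (ω ^ 2 / q) := by field_simp
  rw [← hω]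
  obtain ⟨hdrift, hbalance⟩ := (reducedSymbol.isRoot_charpoly_axis_iff_balance hq.ne' hT.ne'
    (by positivity) hω0 hωV).mp hz
  refine ⟨hq, by positivity, hbalance, le_of_mul_le_mul_left ?_ (pow_pos hq 2)⟩
  calc q ^ 2 * crossingDrift H a K q (ω ^ 2 / q) ^ 2
      = T ^ 2 * (q * H + a) ^ 2 * ω ^ 2 * ξ ^ 2 := by rw [← mul_pow, hdrift]; ring
    _ ≤ T ^ 2 * (q * H + a) ^ 2 * ω ^ 2 * q := by gcongr
    _ = q ^ 2 * (T ^ 2 * (q * H + a) ^ 2 * (ω ^ 2 / q)) := by field_simp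

namespace IsMarginal

lemma exists_not_spectrallyStable (hH : 0 < H) (ha : 0 < a) (hT : 0 < T)
    (h : IsMarginal H a K T D b q V) :
    ∃ ξ : ℝ, ξ ^ 2 ≤ q ∧ ¬ SpectrallyStable (reducedSymbol H a K T D b q ξ) := by
  have hq := h.q_pos
  have hV := h.V_pos
  obtain ⟨ω, hω, hωV⟩ : ∃ ω : ℝ, 0 < ω ∧ ω ^ 2 = q * V :=
    ⟨√(q * V), by positivity, Real.sq_sqrt (by positivity)⟩
  obtain ⟨ξ, hξ⟩ : ∃ ξ : ℝ, q * crossingDrift H a K q V = -(ω * ξ) * T * (q * H + a) :=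
    ⟨-(q * crossingDrift H a K q V) / (ω * T * (q * H + a)), by field_simp⟩
  refine ⟨ξ, ?_, fun hstable ↦ ?_⟩
  · refine le_of_mul_le_mul_left ?_ (show 0 < T ^ 2 * (q * H + a) ^ 2 * ω ^ 2 by positivity)
    calc T ^ 2 * (q * H + a) ^ 2 * ω ^ 2 * ξ ^ 2
        = q ^ 2 * crossingDrift H a K q V ^ 2 := by rw [← mul_pow q, hξ]; ring
      _ ≤ q ^ 2 * (T ^ 2 * (q * H + a) ^ 2 * V) := by gcongr; exact h.drift_sq_le
      _ = T ^ 2 * (q * H + a) ^ 2 * ω ^ 2 * q := by rw [hωV]; ring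
  · have hroot := (reducedSymbol.isRoot_charpoly_axis_iff_balance hq.ne' hT.ne'
      (by positivity) hω.ne' hωV).mpr ⟨hξ, h.balance⟩
    exact (hstable _ hroot).ne (by simp)

lemma drift_pos (hH : 0 < H) (ha : 0 < a) (hK : 0 < K) (hT : 0 < T) (hD : H * D ≤ a * K)
    (hb : 0 ≤ b) (h : IsMarginal H a K T D b q V) : 0 < crossingDrift H a K q V := by
  have hq := h.q_pos
  have hV := h.V_pos
  have hgap : 0 < K * (q * H + a) - H * D := by
    have : 0 < K * (q * H) := by positivity
    linarith
  have hbal : 0 < b * V * crossingDrift H a K q V := by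
    rw [h.balance]
    positivity
  exact pos_of_mul_pos_right hbal (by positivity)

lemma V_lt (hH : 0 < H) (ha : 0 < a) (hK : 0 < K) (hT : 0 < T) (hD : H * D ≤ a * K)
    (hb : 0 ≤ b) (h : IsMarginal H a K T D b q V) : V < H * a := by
  have hq := h.q_pos
  have hV := h.V_pos
  have hdrift := h.drift_pos hH ha hK hT hD hb
  have hpos : 0 < q * K * (H * a - V) := by
    unfold crossingDrift at hdrift
    have : 0 < V * (q * H + a) := by positivity
    linarith
  linarith [pos_of_mul_pos_right hpos (by positivity)]

lemma V_lt_mul_q (hH : 0 < H) (ha : 0 < a) (hK : 0 < K) (hT : 0 < T) (hD : H * D ≤ a * K)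
    (hb : 0 ≤ b) (h : IsMarginal H a K T D b q V) : V < K * H * q := by
  have hq := h.q_pos
  have hV := h.V_pos
  have hdrift := h.drift_pos hH ha hK hT hD hb
  refine lt_of_mul_lt_mul_right ?_ ha.le
  unfold crossingDrift at hdrift
  have : 0 < q * K * V + V * (q * H) := by positivity
  linarith

lemma mul_le_coupling_mul (hH : 0 < H) (ha : 0 < a) (hK : 0 < K) (hT : 0 < T)
    (hD : H * D ≤ a * K) (hb : 0 ≤ b) (h : IsMarginal H a K T D b q V) :
    T * (q * H + a) ≤ b * a := by
  have hq := h.q_pos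
  have hV := h.V_pos
  refine le_of_mul_le_mul_left ?_ (show 0 < V * (q * K * H) by positivity)
  calc V * (q * K * H) * (T * (q * H + a))
      = T * (V * (q * H + a) * (K * (q * H)) + 0) := by ring
    _ ≤ T * (V * (q * H + a) * (K * (q * H + a) - H * D) + q * K * (H * a - V) ^ 2) := by
        gcongr
        · linarith
        · positivity
    _ = b * V * crossingDrift H a K q V := h.balance.symm
    _ ≤ b * V * (q * K * (H * a)) := by
        gcongr
        unfold crossingDrift
        have : 0 < q * K * V + V * (q * H + a) := by positivity
        linarith
    _ = V * (q * K * H) * (b * a) := by ring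

lemma mul_sub_le_coupling_mul (hH : 0 < H) (ha : 0 < a) (hK : 0 < K) (hT : 0 < T)
    (hD : H * D ≤ a * K) (hb : 0 ≤ b) (h : IsMarginal H a K T D b q V) :
    T * (H * a - V) ≤ b * V := by
  have hq := h.q_pos
  have hV := h.V_pos
  have hgap : 0 ≤ K * (q * H + a) - H * D := by
    have : 0 < K * (q * H) := by positivity
    linarith
  have hVHa : 0 < H * a - V := sub_pos.mpr (h.V_lt hH ha hK hT hD hb)
  refine le_of_mul_le_mul_left ?_ (show 0 < q * K * (H * a - V) by positivity)
  calc q * K * (H * a - V) * (T * (H * a - V))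
      = T * (0 + q * K * (H * a - V) ^ 2) := by ring
    _ ≤ T * (V * (q * H + a) * (K * (q * H + a) - H * D) + q * K * (H * a - V) ^ 2) := by
        gcongr
        positivity
    _ = b * V * crossingDrift H a K q V := h.balance.symm
    _ ≤ b * V * (q * K * (H * a - V)) := by
        gcongr
        unfold crossingDrift
        have : 0 < V * (q * H + a) := by positivity
        linarith
    _ = q * K * (H * a - V) * (b * V) := by ring

lemma exists_of_le {b₀ V₀ : ℝ} (hH : 0 < H) (ha : 0 < a) (hK : 0 < K) (hT : 0 < T)
    (hD : H * D ≤ a * K) (hb₀ : 0 ≤ b₀) (hb : b₀ ≤ b) (h : IsMarginal H a K T D b₀ q V₀) :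
    ∃ V, IsMarginal H a K T D b q V := by
  have hq := h.q_pos
  have hV₀ := h.V_pos
  have hdrift := h.drift_pos hH ha hK hT hD hb₀
  have hanti := antitone_crossingDrift hH ha hK hq
  obtain ⟨V₁, hV₁, hdrift₁⟩ := exists_crossingDrift_eq_zero hH ha hK hq
  have hV₀₁ : V₀ ≤ V₁ := by
    by_contra! hlt
    exact (hdrift₁ ▸ hanti hlt.le).not_gt hdrift
  have hgap : 0 ≤ K * (q * H + a) - H * D := by
    have : 0 < K * (q * H) := by positivity
    linarith
  -- Raising `b` moves the solution of `balance` towards the zero `V₁` of the drift.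
  obtain ⟨V, ⟨hV₀V, hVV₁⟩, hbalance⟩ : ∃ V ∈ Icc V₀ V₁, b * V * crossingDrift H a K q V =
      T * (V * (q * H + a) * (K * (q * H + a) - H * D) + q * K * (H * a - V) ^ 2) := by
    refine isPreconnected_Icc.intermediate_value₂ (right_mem_Icc.mpr hV₀₁)
      (left_mem_Icc.mpr hV₀₁) (by fun_prop) (by fun_prop) ?_ ?_
    · rw [hdrift₁, mul_zero]
      positivity
    · rw [← h.balance]
      gcongr
  refine ⟨V, hq, hV₀.trans_le hV₀V, hbalance, ?_⟩
  calc crossingDrift H a K q V ^ 2 ≤ crossingDrift H a K q V₀ ^ 2 := by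
        gcongr
        · exact hdrift₁ ▸ hanti hVV₁
        · exact hanti hV₀V
    _ ≤ T ^ 2 * (q * H + a) ^ 2 * V₀ := h.drift_sq_le
    _ ≤ T ^ 2 * (q * H + a) ^ 2 * V := by gcongr

lemma exists_isMarginal (hH : 0 < H) (ha : 0 < a) (hK : 0 < K) (hT : 0 < T)
    (hD : H * D ≤ a * K) : ∃ b q V, 0 < b ∧ IsMarginal H a K T D b q V := by
  obtain ⟨V₁, hV₁, hdrift₁⟩ := exists_crossingDrift_eq_zero hH ha hK one_pos
  have hsmall : ∀ᶠ V in 𝓝 V₁,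
      crossingDrift H a K 1 V ^ 2 < T ^ 2 * (1 * H + a) ^ 2 * V := by
    refine ContinuousAt.eventually_lt (by fun_prop) (by fun_prop) ?_
    rw [hdrift₁, zero_pow two_ne_zero]
    positivity
  obtain ⟨V, ⟨hVsmall, hV⟩, hVV₁⟩ : ∃ V, (crossingDrift H a K 1 V ^ 2 <
      T ^ 2 * (1 * H + a) ^ 2 * V ∧ 0 < V) ∧ V < V₁ :=
    (((hsmall.and (eventually_gt_nhds hV₁)).filter_mono nhdsWithin_le_nhds).and
      self_mem_nhdsWithin : ∀ᶠ V in 𝓝[<] V₁, _).exists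
  have hdrift : 0 < crossingDrift H a K 1 V := by
    rw [← hdrift₁]
    unfold crossingDrift
    gcongr
  have hgap : 0 < K * (1 * H + a) - H * D := by
    have : 0 < K * H := by positivity
    linarith
  refine ⟨T * (V * (1 * H + a) * (K * (1 * H + a) - H * D) + 1 * K * (H * a - V) ^ 2) /
    (V * crossingDrift H a K 1 V), 1, V, by positivity, one_pos, hV, ?_, hVsmall.le⟩
  field_simp

lemma le_coupling (hH : 0 < H) (ha : 0 < a) (hK : 0 < K) (hT : 0 < T) (hD : H * D ≤ a * K)
    (hb : 0 ≤ b) (h : IsMarginal H a K T D b q V) : T ≤ b := by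
  refine le_of_mul_le_mul_right ?_ ha
  have : 0 < T * (q * H) := by have := h.q_pos; positivity
  linarith [h.mul_le_coupling_mul hH ha hK hT hD hb]

lemma mem_box {B : ℝ} (hH : 0 < H) (ha : 0 < a) (hK : 0 < K) (hT : 0 < T) (hD : H * D ≤ a * K)
    (hb : 0 ≤ b) (hbB : b ≤ B) (h : IsMarginal H a K T D b q V) :
    q ∈ Icc (T * (H * a) / (B + T) / (K * H)) (B * a / (T * H)) ∧
      V ∈ Icc (T * (H * a) / (B + T)) (H * a) := by
  have hV := h.V_pos
  have hB : 0 < B + T := by linarith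
  have hV_ge : T * (H * a) / (B + T) ≤ V := by
    rw [div_le_iff₀ hB]
    have : b * V ≤ B * V := by gcongr
    linarith [h.mul_sub_le_coupling_mul hH ha hK hT hD hb]
  refine ⟨⟨?_, ?_⟩, hV_ge, (h.V_lt hH ha hK hT hD hb).le⟩
  · rw [div_le_iff₀ (by positivity)]
    linarith [h.V_lt_mul_q hH ha hK hT hD hb]
  · rw [le_div_iff₀ (by positivity)]
    have : b * a ≤ B * a := by gcongr
    have : 0 < T * a := by positivity
    linarith [h.mul_le_coupling_mul hH ha hK hT hD hb]

end IsMarginal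

lemma isCompact_setOf_isMarginal {B : ℝ} (hH : 0 < H) (ha : 0 < a) (hK : 0 < K) (hT : 0 < T)
    (hD : H * D ≤ a * K) (hB : 0 ≤ B) :
    IsCompact {x : ℝ × ℝ × ℝ | x.1 ∈ Icc 0 B ∧ IsMarginal H a K T D x.1 x.2.1 x.2.2} := by
  have hbox : IsCompact (Icc 0 B ×ˢ
      Icc (T * (H * a) / (B + T) / (K * H)) (B * a / (T * H)) ×ˢ
        Icc (T * (H * a) / (B + T)) (H * a)) :=
    isCompact_Icc.prod (isCompact_Icc.prod isCompact_Icc)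
  have hbalance : IsClosed {x : ℝ × ℝ × ℝ | x.1 * x.2.2 * crossingDrift H a K x.2.1 x.2.2 =
      T * (x.2.2 * (x.2.1 * H + a) * (K * (x.2.1 * H + a) - H * D)
        + x.2.1 * K * (H * a - x.2.2) ^ 2)} :=
    isClosed_eq (by fun_prop) (by fun_prop)
  have hdrift : IsClosed {x : ℝ × ℝ × ℝ | crossingDrift H a K x.2.1 x.2.2 ^ 2 ≤
      T ^ 2 * (x.2.1 * H + a) ^ 2 * x.2.2} :=
    isClosed_le (by fun_prop) (by fun_prop)
  convert hbox.inter_right (hbalance.inter hdrift) using 1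
  ext ⟨b, q, V⟩
  constructor
  · rintro ⟨hb, h⟩
    exact ⟨⟨hb, h.mem_box hH ha hK hT hD hb.1 hb.2⟩, h.balance, h.drift_sq_le⟩
  · rintro ⟨⟨hb, hq, hV⟩, hbal, hsq⟩
    exact ⟨hb, lt_of_lt_of_le (by positivity) hq.1, lt_of_lt_of_le (by positivity) hV.1, hbal, hsq⟩

lemma exists_marginal_threshold (hH : 0 < H) (ha : 0 < a) (hK : 0 < K) (hT : 0 < T)
    (hD : H * D ≤ a * K) :
    ∃ γ, 0 < γ ∧ ∀ b, 0 ≤ b → ((∀ q V, ¬ IsMarginal H a K T D b q V) ↔ b < γ) := by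
  obtain ⟨B, q₀, V₀, hB, h₀⟩ := IsMarginal.exists_isMarginal hH ha hK hT hD
  obtain ⟨⟨γ, q₁, V₁⟩, ⟨⟨hγ0 : 0 ≤ γ, hγB⟩, h₁⟩, hmin⟩ :=
    (isCompact_setOf_isMarginal hH ha hK hT hD hB.le).exists_isMinOn
      ⟨(B, q₀, V₀), right_mem_Icc.mpr hB.le, h₀⟩ continuous_fst.continuousOn
  refine ⟨γ, hT.trans_le (h₁.le_coupling hH ha hK hT hD hγ0), fun b hb ↦ ⟨fun hno ↦ ?_, ?_⟩⟩
  · by_contra! hγb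
    obtain ⟨V, hV⟩ := h₁.exists_of_le hH ha hK hT hD hγ0 hγb
    exact hno q₁ V hV
  · intro hbγ q V h
    have hmem : (b, q, V) ∈ {x : ℝ × ℝ × ℝ | x.1 ∈ Icc 0 B ∧
        IsMarginal H a K T D x.1 x.2.1 x.2.2} := ⟨⟨hb, hbγ.le.trans hγB⟩, h⟩
    exact (isMinOn_iff.mp hmin _ hmem).not_gt hbγ

lemma not_isMarginal_zero (hH : 0 < H) (ha : 0 < a) (hK : 0 < K) (hT : 0 < T)
    (hD : H * D ≤ a * K) : ¬ IsMarginal H a K T D 0 q V :=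
  fun h ↦ (h.le_coupling hH ha hK hT hD le_rfl).not_gt hT

end Marginal

namespace reducedSymbol

open scoped ComplexConjugate

variable {H a K T D b q ξ : ℝ}

lemma spectrallyStable_zero_zero (hH : 0 < H) (ha : 0 < a) (hK : 0 < K) (hq : 0 < q) :
    SpectrallyStable (reducedSymbol H a K T 0 0 q ξ) := by
  intro z hz
  have hfactor : (z + Complex.I * ξ * T + q * H) * (z + Complex.I * ξ * T + a) * (z + q * K) =
      0 := by
    rw [IsRoot.def, eval_charpoly] at hz
    linear_combination (norm := (push_cast; ring)) hz
  have hqH : 0 < q * H := by positivity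
  have hqK : 0 < q * K := by positivity
  rw [mul_eq_zero, mul_eq_zero] at hfactor
  rcases hfactor with (h | h) | h
  · have hroot : z = -(q * H) - Complex.I * ξ * T := by linear_combination h
    simpa [hroot] using hqH
  · have hroot : z = -a - Complex.I * ξ * T := by linear_combination h
    simpa [hroot] using ha
  · have hroot : z = -(q * K) := by linear_combination h
    simpa [hroot] using hqK

lemma spectrallyStable_coupling_zero (hH : 0 < H) (ha : 0 < a) (hK : 0 < K) (hT : 0 < T)
    (hD : H * D ≤ a * K) (hq : 0 < q) (hξ : ξ ^ 2 ≤ q) :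
    SpectrallyStable (reducedSymbol H a K T D 0 q ξ) := by
  refine forall_spectrallyStable_of_isPreconnected
    ((continuous_coupling H a K T q ξ).comp (Continuous.prodMk_left 0))
    (isPreconnected_Iic (a := a * K / H)) (x₀ := 0) (mem_Iic.mpr (by positivity))
    (spectrallyStable_zero_zero hH ha hK hq) (fun D' hD' z hz hre ↦ ?_) D
    (mem_Iic.mpr ((le_div_iff₀' hH).mpr hD))
  exact not_isMarginal_zero hH ha hK hT ((le_div_iff₀' hH).mp hD')
    (isMarginal_of_isRoot_charpoly hH ha hK hT hq hξ hz hre)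

lemma spectrallyStable_of_forall_not_isMarginal (hH : 0 < H) (ha : 0 < a) (hK : 0 < K) (hT : 0 < T)
    (hD : H * D ≤ a * K) (hb : 0 ≤ b) (hno : ∀ V, ¬ IsMarginal H a K T D b q V) (hq : 0 < q)
    (hξ : ξ ^ 2 ≤ q) : SpectrallyStable (reducedSymbol H a K T D b q ξ) := by
  refine forall_spectrallyStable_of_isPreconnected
    ((continuous_coupling H a K T q ξ).comp (Continuous.prodMk_right D))
    (isPreconnected_Icc (a := 0) (b := b)) (left_mem_Icc.mpr hb)
    (spectrallyStable_coupling_zero hH ha hK hT hD hq hξ) (fun b' hb' z hz hre ↦ ?_) b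
    (right_mem_Icc.mpr hb)
  obtain ⟨V, hV⟩ := (isMarginal_of_isRoot_charpoly hH ha hK hT hq hξ hz hre).exists_of_le
    hH ha hK hT hD hb'.1 hb'.2
  exact hno V hV

/-- The value of `Re (p'(0) * conj p(0)) / ξ⁴` for the characteristic polynomial `p` of
`reducedSymbol` at `q = M ξ²`, as a polynomial in `x = ξ²`. -/
def lowFrequencyLogDeriv (H a K T D b M x : ℝ) : ℝ :=
  x * (M * K * (M * H * a - T ^ 2)
      * (M * (K * (M * x * H + a) + H * a - H * D) - T ^ 2 + 2 * b * T))
    + T ^ 2 * ((2 * M * K + M * H) * x + a) * (M * K * (M * x * H + a) + b * T - M * H * D)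

lemma re_derivative_mul_conj_eval_zero (H a K T D b M ξ : ℝ) :
    ((reducedSymbol H a K T D b (M * ξ ^ 2) ξ).charpoly.derivative.eval 0 *
      conj ((reducedSymbol H a K T D b (M * ξ ^ 2) ξ).charpoly.eval 0)).re =
      ξ ^ 4 * lowFrequencyLogDeriv H a K T D b M (ξ ^ 2) := by
  obtain ⟨q, hq⟩ : ∃ q, q = M * ξ ^ 2 := ⟨_, rfl⟩
  have hval : (reducedSymbol H a K T D b q ξ).charpoly.eval 0 =
      ⟨q * K * (q * H * a - ξ ^ 2 * T ^ 2),
        ξ * T * (q * K * (q * H + a) + ξ ^ 2 * b * T - q * H * D)⟩ := by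
    rw [eval_charpoly, Complex.mk_eq_add_mul_I]
    push_cast
    linear_combination (q * K * ξ ^ 2 * T ^ 2 - Complex.I * ξ ^ 3 * b * T ^ 2) * Complex.I_sq
  have hderiv : (reducedSymbol H a K T D b q ξ).charpoly.derivative.eval 0 =
      ⟨q * K * (q * H + a) + q * H * a - ξ ^ 2 * T ^ 2 + 2 * ξ ^ 2 * b * T - q * H * D,
        ξ * T * (2 * q * K + q * H + a)⟩ := by
    rw [eval_derivative_charpoly, Complex.mk_eq_add_mul_I]
    push_cast
    linear_combination (ξ ^ 2 * T ^ 2 - 2 * ξ ^ 2 * b * T) * Complex.I_sq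
  rw [← hq, hval, hderiv, Complex.mul_re, Complex.conj_re, Complex.conj_im, lowFrequencyLogDeriv,
    hq]
  ring

lemma exists_not_spectrallyStable (ha : 0 < a) (hT : 0 < T) (hD : a * K < H * D) :
    ∃ q ξ : ℝ, 0 < q ∧ ξ ^ 2 ≤ q ∧ ¬ SpectrallyStable (reducedSymbol H a K T D b q ξ) := by
  obtain ⟨M, hM, hMb⟩ : ∃ M, 1 ≤ M ∧ b * T < M * (H * D - a * K) :=
    ((eventually_ge_atTop 1).and
      ((tendsto_id.atTop_mul_const (sub_pos.mpr hD)).eventually_gt_atTop (b * T))).exists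
  have hzero : lowFrequencyLogDeriv H a K T D b M (0 ^ 2) < 0 := by
    calc lowFrequencyLogDeriv H a K T D b M (0 ^ 2)
        = T ^ 2 * a * (b * T - M * (H * D - a * K)) := by rw [lowFrequencyLogDeriv]; ring
      _ < 0 := mul_neg_of_pos_of_neg (by positivity) (by linarith)
  have hcont : Continuous fun ξ : ℝ ↦ lowFrequencyLogDeriv H a K T D b M (ξ ^ 2) := by
    unfold lowFrequencyLogDeriv
    fun_prop
  obtain ⟨ξ, hneg, hξ⟩ : ∃ ξ : ℝ, lowFrequencyLogDeriv H a K T D b M (ξ ^ 2) < 0 ∧ 0 < ξ :=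
    (((hcont.continuousAt.eventually_lt continuousAt_const hzero).filter_mono
      nhdsWithin_le_nhds).and (self_mem_nhdsWithin : ∀ᶠ ξ in 𝓝[>] (0 : ℝ), 0 < ξ)).exists
  refine ⟨M * ξ ^ 2, ξ, by positivity, le_mul_of_one_le_left (sq_nonneg ξ) hM, fun hstable ↦ ?_⟩
  have hdeg : 0 < (reducedSymbol H a K T D b (M * ξ ^ 2) ξ).charpoly.natDegree := by
    rw [Matrix.charpoly_natDegree_eq_dim]
    decide
  have hpos := re_derivative_div_eval_pos hdeg (z := 0) hstable
  rw [div_eq_mul_inv, Complex.inv_def, ← mul_assoc, Complex.re_mul_ofReal,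
    re_derivative_mul_conj_eval_zero] at hpos
  have hprod := pos_of_mul_pos_left hpos (inv_nonneg.mpr (Complex.normSq_nonneg _))
  exact hprod.not_ge (mul_nonpos_of_nonneg_of_nonpos (by positivity) hneg.le)

end reducedSymbol

lemma exists_stability_threshold {H a K T : ℝ} (hH : 0 < H) (ha : 0 < a) (hK : 0 < K) (hT : 0 < T)
    (D : ℝ) :
    ∃ γ, 0 < γ ∧ ∀ b, 0 ≤ b →
      ((∀ q ξ : ℝ, 0 < q → ξ ^ 2 ≤ q → SpectrallyStable (reducedSymbol H a K T D b q ξ)) ↔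
        H * D ≤ a * K ∧ b < γ) := by
  rcases le_or_gt (H * D) (a * K) with hD | hD
  · obtain ⟨γ, hγ, hthreshold⟩ := exists_marginal_threshold hH ha hK hT hD
    refine ⟨γ, hγ, fun b hb ↦ ?_⟩
    rw [and_iff_right hD, ← hthreshold b hb]
    constructor
    · intro hstable q V h
      obtain ⟨ξ, hξ, hunstable⟩ := h.exists_not_spectrallyStable hH ha hT
      exact hunstable (hstable q ξ h.q_pos hξ)
    · intro hno q ξ hq hξ
      exact reducedSymbol.spectrallyStable_of_forall_not_isMarginal hH ha hK hT hD hb (hno q) hq hξ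
  · refine ⟨1, one_pos, fun b _ ↦ iff_of_false (fun hstable ↦ ?_) fun h ↦ h.1.not_gt hD⟩
    obtain ⟨q, ξ, hq, hξ, hunstable⟩ := reducedSymbol.exists_not_spectrallyStable ha hT hD
    exact hunstable (hstable q ξ hq hξ)

theorem spectral_stability_creep_pos_general (α hb cb ρs s e m T K : ℝ)
    (hα : 0 < α) (hhb : 0 < hb) (hcb : 0 < cb) (hρs : 0 < ρs)
    (hs : 0 < s) (he : 0 < e) (hT : 0 < T) (hK : 0 < K) :
    ∃ γ : ℝ, 0 < γ ∧ ∀ n : ℝ, 0 ≤ n →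
      ((∀ ξ η : ℝ, (ξ, η) ≠ (0, 0) →
          SpectrallyStable (landA α hb cb ρs s e m n T K ξ η)) ↔
        (α * m * hb * cb / ρs ≤ K ∧ n < γ)) := by
  obtain ⟨a, ha_def⟩ : ∃ a, a = s * ρs / (e * hb) := ⟨_, rfl⟩
  have ha : 0 < a := by rw [ha_def]; positivity
  obtain ⟨γ, hγ, hthreshold⟩ :=
    exists_stability_threshold (mul_pos hα hhb) ha hK hT (a * m * cb / ρs)
  refine ⟨γ * (T * ρs) / (α * a * cb * hb), by positivity, fun n hn ↦ ?_⟩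
  have hcreep : α * hb * (a * m * cb / ρs) ≤ a * K ↔ α * m * hb * cb / ρs ≤ K := by
    rw [← mul_le_mul_iff_right₀ ha]
    field_simp
  have hexponent : α * a * n * cb * hb / (T * ρs) < γ ↔
      n < γ * (T * ρs) / (α * a * cb * hb) := by
    rw [div_lt_iff₀ (by positivity), lt_div_iff₀ (by positivity)]
    ring_nf
  rw [← hcreep, ← hexponent, ← hthreshold _ (by positivity), ← forall_sq_add_sq_iff]
  simp only [SpectrallyStable, charpoly_landA hhb.ne' hρs.ne' he.ne' hT.ne', ha_def]

/-- For `K > 0` there is a constant `γ > 0`, independent of `n`, such that the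
linearized system with exponent `n` is spectrally stable at every nonzero
frequency iff `K ≥ α m h̄ c̄ / ρ̄ₛ` and `n < γ`. -/
theorem spectral_stability_creep_pos (α hb cb ρs s e m T K : ℝ)
    (hα : 0 < α) (hhb : 0 < hb) (hcb : 0 < cb) (hρs : 0 < ρs)
    (hs : 0 < s) (he : 0 < e) (hm : 0 < m) (hT : 0 < T) (hK : 0 < K) :
    ∃ γ : ℝ, 0 < γ ∧ ∀ n : ℝ, 0 < n →
      ((∀ ξ η : ℝ, (ξ, η) ≠ (0, 0) →
          SpectrallyStable (landA α hb cb ρs s e m n T K ξ η)) ↔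
        (α * m * hb * cb / ρs ≤ K ∧ n < γ)) := by
  obtain ⟨γ, hγ, h⟩ :=
    spectral_stability_creep_pos_general α hb cb ρs s e m T K hα hhb hcb hρs hs he hT hK
  exact ⟨γ, hγ, fun n hn ↦ h n hn.le⟩
end

section
/- Fix positive reals α, h̄, c̄, ρ̄_s, s, e, m, n, T = tanθ, and assume K = 0 and n ≤ m. Then for every frequency (ξ,η) ∈ ℝ² \ {(0,0)}, the matrix A(ξ,η) has at least one eigenvalue with nonnegative real part; i.e. the linearized system is spectrally unstable at every nonzero frequency. -/
section TraceInv

variable {ι : Type*} [Fintype ι] [DecidableEq ι]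

theorem trace_inv_eq_trace_adjugate_div_det {K : Type*} [Field K] (A : Matrix ι ι K) :
    A⁻¹.trace = A.adjugate.trace / A.det := by
  rw [Matrix.inv_def, Matrix.trace_smul, Ring.inverse_eq_inv', smul_eq_mul, inv_mul_eq_div]

variable [Nonempty ι] {A : Matrix ι ι ℂ}

theorem exists_mem_spectrum_re_nonneg_of_trace_re_nonneg (hA : 0 ≤ A.trace.re) :
    ∃ z ∈ spectrum ℂ A, 0 ≤ z.re := by
  by_contra! hneg
  have hroots : A.charpoly.roots ≠ 0 :=
    (IsAlgClosed.splits _).roots_ne_zero (by simp [Matrix.charpoly_natDegree_eq_dim])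
  have hsum : (A.charpoly.roots.map Complex.re).sum < (A.charpoly.roots.map fun _ ↦ 0).sum :=
    Multiset.sum_lt_sum_of_nonempty hroots fun z hz ↦
      hneg z (Matrix.mem_spectrum_of_isRoot_charpoly (Polynomial.isRoot_of_mem_roots hz))
  have htrace : A.trace.re = (A.charpoly.roots.map Complex.re).sum := by
    rw [Matrix.trace_eq_sum_roots_charpoly]
    exact map_multiset_sum Complex.reAddGroupHom _
  rw [Multiset.sum_map_zero] at hsum
  exact hA.not_gt (htrace ▸ hsum)

theorem exists_mem_spectrum_re_nonneg_of_trace_inv_re_nonneg (hA : 0 ≤ A⁻¹.trace.re) :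
    ∃ z ∈ spectrum ℂ A, 0 ≤ z.re := by
  by_cases hunit : IsUnit A
  · obtain ⟨z, hz, hz_re⟩ := exists_mem_spectrum_re_nonneg_of_trace_re_nonneg hA
    lift A to (Matrix ι ι ℂ)ˣ using hunit
    rw [← Matrix.coe_units_inv] at hz
    refine ⟨z⁻¹, spectrum.inv₀_mem_iff.mpr hz, ?_⟩
    rw [Complex.inv_re]
    exact div_nonneg hz_re (Complex.normSq_nonneg z)
  · exact ⟨0, (spectrum.zero_mem_iff ℂ).mpr hunit, le_rfl⟩

theorem exists_isRoot_charpoly_re_nonneg_of_det_re_eq_zero (hdet : A.det.re = 0)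
    (him : 0 ≤ A.adjugate.trace.im * A.det.im) :
    ∃ z : ℂ, A.charpoly.IsRoot z ∧ 0 ≤ z.re := by
  have htrace : 0 ≤ A⁻¹.trace.re := by
    rw [trace_inv_eq_trace_adjugate_div_det, Complex.div_re, hdet, mul_zero, zero_div, zero_add]
    exact div_nonneg him (Complex.normSq_nonneg _)
  obtain ⟨z, hz, hz_re⟩ := exists_mem_spectrum_re_nonneg_of_trace_inv_re_nonneg htrace
  exact ⟨z, Matrix.mem_spectrum_iff_isRoot_charpoly.mp hz, hz_re⟩

end TraceInv

/-- The common shape of the symbols without creep. Here `a` is the deposition rate, `d` the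
diffusion of the water surface, `p` and `q` are the responses of the sediment concentration to the
fluid height and to the slope, `r` is the ratio of fluid height to sediment density, and `τ` is the
advection frequency. Since sediment is only exchanged between fluid and bed, the last row plus `r`
times the middle row is `(0, -I * r * τ, 0)`, which makes the determinant a product. -/
noncomputable def noCreepSymbol (a d p q r τ : ℝ) : Matrix (Fin 3) (Fin 3) ℂ :=
  !![-(Complex.I * τ) - d, 0, -d;
     p - Complex.I * q, -a - Complex.I * τ, -(Complex.I * q);
     r * (Complex.I * q - p), r * a, r * (Complex.I * q)]

theorem det_noCreepSymbol (a d p q r τ : ℝ) :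
    (noCreepSymbol a d p q r τ).det = Complex.I * ↑(τ * r * (d * p - τ * q)) := by
  simp only [noCreepSymbol, Matrix.det_fin_three, Matrix.of_apply, Matrix.cons_val]
  push_cast
  linear_combination (Complex.I * r * τ ^ 2 * q) * Complex.I_sq

theorem im_trace_adjugate_noCreepSymbol (a d p q r τ : ℝ) :
    (noCreepSymbol a d p q r τ).adjugate.trace.im = τ * (a + d) := by
  simp only [noCreepSymbol, Matrix.adjugate_fin_three_of, Matrix.trace_fin_three_of,
    Complex.add_im, Complex.sub_im, Complex.sub_re, Complex.neg_im, Complex.neg_re, Complex.mul_im,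
    Complex.mul_re, Complex.I_im, Complex.I_re, Complex.ofReal_im, Complex.ofReal_re,
    Complex.zero_im, Complex.zero_re]
  ring

theorem exists_isRoot_charpoly_noCreepSymbol_re_nonneg {a d p q r τ : ℝ}
    (hr : 0 ≤ r) (had : 0 ≤ a + d) (hpq : τ * q ≤ d * p) :
    ∃ z : ℂ, (noCreepSymbol a d p q r τ).charpoly.IsRoot z ∧ 0 ≤ z.re := by
  apply exists_isRoot_charpoly_re_nonneg_of_det_re_eq_zero
  · rw [det_noCreepSymbol, Complex.I_mul_re, Complex.ofReal_im, neg_zero]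
  · rw [im_trace_adjugate_noCreepSymbol, det_noCreepSymbol, Complex.I_mul_im, Complex.ofReal_re]
    calc
      0 ≤ τ ^ 2 * r * (a + d) * (d * p - τ * q) :=
        mul_nonneg (by positivity) (sub_nonneg.mpr hpq)
      _ = τ * (a + d) * (τ * r * (d * p - τ * q)) := by ring

/-- The constant `a = s·ρ̄ₛ/(e·h̄)` of the linearized system. -/
noncomputable def depositionRate (hb ρs s e : ℝ) : ℝ :=
  s * ρs / (e * hb)

theorem landA_no_creep_eq_noCreepSymbol {hb : ℝ} (hhb : hb ≠ 0) (α cb ρs s e m n T ξ η : ℝ) :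
    landA α hb cb ρs s e m n T 0 ξ η =
      noCreepSymbol (depositionRate hb ρs s e) (α * hb * (ξ ^ 2 + η ^ 2))
        (depositionRate hb ρs s e * m * cb / hb)
        (ξ * (α * depositionRate hb ρs s e * n * cb / T))
        (hb / ρs) (ξ * T) := by
  have hhb' : (hb : ℂ) ≠ 0 := Complex.ofReal_ne_zero.mpr hhb
  ext i j
  fin_cases i <;> fin_cases j <;>
    simp [landA, noCreepSymbol, depositionRate] <;> field_simp <;> ring

theorem spectral_instability_no_creep_n_le_m_general {α hb cb ρs s e T : ℝ}
    (hα : 0 < α) (hhb : 0 < hb) (hcb : 0 < cb) (hρs : 0 < ρs)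
    (hs : 0 < s) (he : 0 < e) (hT : T ≠ 0) {m n ξ η : ℝ}
    (hfreq : n * ξ ^ 2 ≤ m * (ξ ^ 2 + η ^ 2)) :
    ∃ z : ℂ, (landA α hb cb ρs s e m n T 0 ξ η).charpoly.IsRoot z ∧ 0 ≤ z.re := by
  rw [landA_no_creep_eq_noCreepSymbol hhb.ne']
  set a := depositionRate hb ρs s e
  have ha : 0 < a := div_pos (mul_pos hs hρs) (mul_pos he hhb)
  apply exists_isRoot_charpoly_noCreepSymbol_re_nonneg
  · positivity
  · positivity
  · calc
      ξ * T * (ξ * (α * a * n * cb / T)) = α * a * cb * (n * ξ ^ 2) := by field_simp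
      _ ≤ α * a * cb * (m * (ξ ^ 2 + η ^ 2)) := by gcongr
      _ = α * hb * (ξ ^ 2 + η ^ 2) * (a * m * cb / hb) := by field_simp

/-- When `K = 0` and `n ≤ m`, the linearized system is spectrally unstable at
every nonzero frequency: `A(ξ,η)` has an eigenvalue with nonnegative real
part. -/
theorem spectral_instability_no_creep_n_le_m (α hb cb ρs s e m n T : ℝ)
    (hα : 0 < α) (hhb : 0 < hb) (hcb : 0 < cb) (hρs : 0 < ρs)
    (hs : 0 < s) (he : 0 < e) (hm : 0 < m) (hn : 0 < n) (hT : 0 < T)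
    (hnm : n ≤ m) :
    ∀ ξ η : ℝ, (ξ, η) ≠ (0, 0) →
      ∃ z : ℂ, (landA α hb cb ρs s e m n T 0 ξ η).charpoly.IsRoot z ∧
        0 ≤ z.re := by
  intro ξ η _
  exact spectral_instability_no_creep_n_le_m_general hα hhb hcb hρs hs he hT.ne'
    (mul_le_mul hnm (le_add_of_nonneg_right (sq_nonneg η)) (sq_nonneg ξ) hm.le)
end

section
/- Let c > 0 and α h̄ > 0 be real numbers, define f : [0, c) → ℝ by f(K) = K·(α h̄ + K − c)² / (c − K), and set d := max(0, c − α h̄). Then f is strictly increasing and strictly positive on the open interval (d, c), f(K) → 0 as K → d⁺ (and f(d) = 0), f(K) → +∞ as K → c⁻, and consequently for every y > 0 there is a unique K ∈ (d, c) with f(K) = y. -/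
open Filter Set

/-!
On `[d, c)` the numerator `K(αh̄ + K − c)²` is a product of nonnegative increasing factors and
vanishes at `d`, while the denominator `c − K` decreases to `0⁺`. Hence `f` increases strictly and
continuously from `f(d) = 0` to `+∞`, and the intermediate value theorem makes it a bijection from
`(d, c)` onto `(0, ∞)`. Keeping the endpoint `d` in the interval of monotonicity gives positivity
for free.
-/

section General

variable {α β R 𝕜 : Type*}

theorem strictMonoOn_div_of_antitoneOn [Preorder α] [Field 𝕜] [LinearOrder 𝕜]
    [IsStrictOrderedRing 𝕜] {s : Set α} {f g : α → 𝕜} (hf : StrictMonoOn f s)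
    (hg : AntitoneOn g s) (hf_nonneg : ∀ x ∈ s, 0 ≤ f x) (hg_pos : ∀ x ∈ s, 0 < g x) :
    StrictMonoOn (fun x => f x / g x) s := fun _ hx y hy hxy =>
  div_lt_div₀ (hf hx hy hxy) (hg hx hy hxy.le) (hf_nonneg y hy) (hg_pos y hy)

theorem strictMonoOn_mul_add_sub_sq [CommRing R] [LinearOrder R] [IsStrictOrderedRing R] (c a : R) :
    StrictMonoOn (fun x => x * (a + x - c) ^ 2) (Ici (max 0 (c - a))) := by
  intro x hx y _ hxy
  obtain ⟨hx_nonneg, hx_ge⟩ : 0 ≤ x ∧ c - a ≤ x := max_le_iff.1 hx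
  have hsq : (a + x - c) ^ 2 < (a + y - c) ^ 2 :=
    pow_lt_pow_left₀ (by linarith) (by linarith) two_ne_zero
  exact mul_lt_mul'' hxy hsq hx_nonneg (sq_nonneg _)

theorem tendsto_div_const_sub_nhdsLT_atTop [Field 𝕜] [LinearOrder 𝕜] [IsStrictOrderedRing 𝕜]
    [TopologicalSpace 𝕜] [OrderTopology 𝕜] {f : 𝕜 → 𝕜} {b l : 𝕜} (hl : 0 < l)
    (hf : Tendsto f (nhdsWithin b (Iio b)) (nhds l)) :
    Tendsto (fun x => f x / (b - x)) (nhdsWithin b (Iio b)) atTop := by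
  have hsub : Tendsto (fun x => b - x) (nhdsWithin b (Iio b)) (nhdsWithin 0 (Ioi 0)) := by
    rw [Tendsto, map_subLeft_nhdsLT, sub_self]
  simpa only [div_eq_mul_inv, Pi.inv_apply] using hf.pos_mul_atTop hl hsub.inv_tendsto_nhdsGT_zero

theorem bijOn_Ioo_Ioi_of_strictMonoOn_of_tendsto_atTop
    [ConditionallyCompleteLinearOrder α] [DenselyOrdered α] [TopologicalSpace α] [OrderTopology α]
    [LinearOrder β] [TopologicalSpace β] [OrderClosedTopology β] {a b : α} {f : α → β} (hab : a < b)
    (hmono : StrictMonoOn f (Ico a b)) (hcont : ContinuousOn f (Ico a b))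
    (htop : Tendsto f (nhdsWithin b (Iio b)) atTop) :
    BijOn f (Ioo a b) (Ioi (f a)) := by
  have ha : a ∈ Ico a b := left_mem_Ico.2 hab
  refine ⟨fun x hx => hmono ha (Ioo_subset_Ico_self hx) hx.1,
    hmono.injOn.mono Ioo_subset_Ico_self, fun y hy => ?_⟩
  have : NeBot (nhdsWithin b (Iio b)) := nhdsLT_neBot_of_exists_lt ⟨a, hab⟩
  obtain ⟨x, hx, rfl⟩ := isPreconnected_Ico.intermediate_value_Ici ha
    (le_principal_iff.2 (Ico_mem_nhdsLT hab)) hcont htop (mem_Ioi.1 hy).le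
  exact ⟨x, ⟨(hmono.lt_iff_lt ha hx).1 hy, hx.2⟩, rfl⟩

end General

/-- The threshold function `f` of low-frequency stability, with `A` standing for `α h̄`. It is
defined on all of `ℝ`, with the junk value `0` at the pole `K = c`. -/
noncomputable def thresholdFunction (c A K : ℝ) : ℝ :=
  K * (A + K - c) ^ 2 / (c - K)

section ThresholdFunction

variable (c A : ℝ)

theorem strictMonoOn_thresholdFunction :
    StrictMonoOn (thresholdFunction c A) (Ico (max 0 (c - A)) c) :=
  strictMonoOn_div_of_antitoneOn
    ((strictMonoOn_mul_add_sub_sq c A).mono Ico_subset_Ici_self)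
    (fun _ _ _ _ hxy => sub_le_sub_left hxy c)
    (fun _ hx => mul_nonneg ((le_max_left _ _).trans hx.1) (sq_nonneg _))
    (fun _ hx => sub_pos.2 hx.2)

theorem continuousOn_thresholdFunction :
    ContinuousOn (thresholdFunction c A) (Iio c) :=
  ContinuousOn.div (by fun_prop) (by fun_prop) fun _ hx => (sub_pos.2 hx).ne'

theorem thresholdFunction_max_zero_sub :
    thresholdFunction c A (max 0 (c - A)) = 0 := by
  rcases max_choice 0 (c - A) with h | h <;> simp [thresholdFunction, h]

variable {c A}

theorem tendsto_thresholdFunction_nhdsLT_atTop (hc : 0 < c) (hA : A ≠ 0) :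
    Tendsto (thresholdFunction c A) (nhdsWithin c (Iio c)) atTop := by
  have hnum : Continuous fun K : ℝ => K * (A + K - c) ^ 2 := by fun_prop
  have hpos : 0 < c * (A + c - c) ^ 2 := by
    rw [add_sub_cancel_right]
    positivity
  exact tendsto_div_const_sub_nhdsLT_atTop hpos hnum.continuousWithinAt

theorem bijOn_thresholdFunction (hc : 0 < c) (hA : 0 < A) :
    BijOn (thresholdFunction c A) (Ioo (max 0 (c - A)) c) (Ioi 0) := by
  simpa only [thresholdFunction_max_zero_sub] using
    bijOn_Ioo_Ioi_of_strictMonoOn_of_tendsto_atTop (max_lt hc (sub_lt_self c hA))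
      (strictMonoOn_thresholdFunction c A)
      ((continuousOn_thresholdFunction c A).mono Ico_subset_Iio_self)
      (tendsto_thresholdFunction_nhdsLT_atTop hc hA.ne')

theorem tendsto_thresholdFunction_nhdsGT_zero (hc : 0 < c) (hA : 0 < A) :
    Tendsto (thresholdFunction c A)
      (nhdsWithin (max 0 (c - A)) (Ioi (max 0 (c - A)))) (nhds 0) := by
  have hcont : ContinuousAt (thresholdFunction c A) (max 0 (c - A)) :=
    (continuousOn_thresholdFunction c A).continuousAt
      (Iio_mem_nhds (max_lt hc (sub_lt_self c hA)))
  simpa only [thresholdFunction_max_zero_sub] using hcont.continuousWithinAt.tendsto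

end ThresholdFunction

/-- Properties of the threshold function `f(K) = K(αh̄ + K − c)²/(c − K)`
governing low-frequency stability: with `d = max(0, c − αh̄)`, `f` is strictly
increasing and strictly positive on `(d, c)`, tends to `0` as `K → d⁺` (with
`f(d) = 0`), tends to `+∞` as `K → c⁻`, and every `y > 0` is attained exactly
once on `(d, c)`. Here `A` stands for `α h̄ > 0`. -/
theorem threshold_function_properties (c A : ℝ) (hc : 0 < c) (hA : 0 < A) :
    StrictMonoOn (fun K : ℝ => K * (A + K - c) ^ 2 / (c - K))
        (Ioo (max 0 (c - A)) c) ∧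
    (∀ K ∈ Ioo (max 0 (c - A)) c, 0 < K * (A + K - c) ^ 2 / (c - K)) ∧
    Tendsto (fun K : ℝ => K * (A + K - c) ^ 2 / (c - K))
        (nhdsWithin (max 0 (c - A)) (Ioi (max 0 (c - A)))) (nhds 0) ∧
    (max 0 (c - A)) * (A + (max 0 (c - A)) - c) ^ 2 / (c - (max 0 (c - A))) = 0 ∧
    Tendsto (fun K : ℝ => K * (A + K - c) ^ 2 / (c - K))
        (nhdsWithin c (Iio c)) atTop ∧
    (∀ y : ℝ, 0 < y → ∃! K : ℝ,
        K ∈ Ioo (max 0 (c - A)) c ∧ K * (A + K - c) ^ 2 / (c - K) = y) := by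
  have hbij := bijOn_thresholdFunction hc hA
  refine ⟨(strictMonoOn_thresholdFunction c A).mono Ioo_subset_Ico_self,
    fun K hK => hbij.mapsTo hK,
    tendsto_thresholdFunction_nhdsGT_zero hc hA,
    thresholdFunction_max_zero_sub c A,
    tendsto_thresholdFunction_nhdsLT_atTop hc hA.ne', fun y hy => ?_⟩
  obtain ⟨K, hK, hKy⟩ := hbij.surjOn hy
  exact ⟨K, ⟨hK, hKy⟩, fun L ⟨hL, hLy⟩ => hbij.injOn hL hK (hLy.trans hKy.symm)⟩
end

section
/- Let η̄ > 0, ξ̄ ∈ ℝ, K̄ ≥ 0 and μ > 0 be real numbers, set β := 1 + K̄ − μ, and consider the complex quadratic polynomial p(z) = z² + (η̄² β − i ξ̄)·z + (η̄⁴ K̄ − i ξ̄ η̄²). Then both roots of p have strictly negative real part if and only if β > 0 and η̄⁴ K̄ β² > ξ̄² (μ − K̄). -/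
/-!
If `z` and `w` are the roots of `v² + B v + C`, then `Re B = -(Re z + Re w)`, while the second
Bilharz–Hurwitz determinant of `B` and `C` factors as `Re z · Re w · |z + w̄|²`. When `Re z + Re w`
is nonzero so is `z + w̄`, and the determinant has the sign of `Re z · Re w`; hence both real parts
are negative exactly when `Re B` and the determinant are positive. For the low-frequency
quadratic, the determinant is `η⁴ (η⁴ K β² - ξ² (μ - K))`.
-/

open ComplexConjugate

theorem exists_roots_eq_neg_add_and_eq_mul {k : Type*} [Field k] [IsAlgClosed k] (b c : k) :
    ∃ z w : k, b = -(z + w) ∧ c = z * w := by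
  have hdeg : (.X ^ 2 + .C b * .X + .C c : Polynomial k).degree = 2 := by compute_degree!
  obtain ⟨z, hz⟩ := IsAlgClosed.exists_root _ (hdeg.trans_ne two_ne_zero)
  have hz : z ^ 2 + b * z + c = 0 := by simpa using hz
  exact ⟨z, -b - z, by ring, by linear_combination hz⟩

theorem forall_quadratic_root_iff {R : Type*} [CommRing R] [NoZeroDivisors R] (P : R → Prop)
    (z w : R) : (∀ v, v ^ 2 + -(z + w) * v + z * w = 0 → P v) ↔ P z ∧ P w := by
  have hroot (v : R) : v ^ 2 + -(z + w) * v + z * w = 0 ↔ v = z ∨ v = w := by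
    rw [show v ^ 2 + -(z + w) * v + z * w = (v - z) * (v - w) by ring, mul_eq_zero,
      sub_eq_zero, sub_eq_zero]
  simp only [hroot, forall_eq_or_imp, forall_eq]

theorem neg_and_neg_iff_add_neg_and_mul_pos {R : Type*} [Ring R] [LinearOrder R]
    [IsStrictOrderedRing R] {a b : R} : a < 0 ∧ b < 0 ↔ a + b < 0 ∧ 0 < a * b := by
  refine ⟨fun ⟨ha, hb⟩ => ⟨add_neg ha hb, mul_pos_of_neg_of_neg ha hb⟩, fun ⟨hadd, hmul⟩ => ?_⟩
  exact (mul_pos_iff.mp hmul).resolve_left fun ⟨ha, hb⟩ => (add_pos ha hb).not_gt hadd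

/-- The second Bilharz–Hurwitz determinant of the complex quadratic `z² + B z + C`, whose sign
together with that of `Re B` decides whether the roots lie in the open left half-plane. -/
def bilharzDet (B C : ℂ) : ℝ :=
  B.re ^ 2 * C.re + B.re * B.im * C.im - C.im ^ 2

theorem bilharzDet_neg_add_mul (z w : ℂ) :
    bilharzDet (-(z + w)) (z * w) = z.re * w.re * Complex.normSq (z + conj w) := by
  simp only [bilharzDet, Complex.normSq_apply, Complex.neg_re, Complex.neg_im, Complex.add_re,
    Complex.add_im, Complex.mul_re, Complex.mul_im, Complex.conj_re, Complex.conj_im]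
  ring

theorem bilharzDet_neg_add_mul_pos_iff {z w : ℂ} (h : z.re + w.re ≠ 0) :
    0 < bilharzDet (-(z + w)) (z * w) ↔ 0 < z.re * w.re := by
  have hne : z + conj w ≠ 0 := fun h0 => h (by simpa using congrArg Complex.re h0)
  rw [bilharzDet_neg_add_mul, mul_pos_iff_of_pos_right (Complex.normSq_pos.mpr hne)]

theorem forall_quadratic_root_re_neg_iff (B C : ℂ) :
    (∀ z : ℂ, z ^ 2 + B * z + C = 0 → z.re < 0) ↔ 0 < B.re ∧ 0 < bilharzDet B C := by
  obtain ⟨z, w, rfl, rfl⟩ := exists_roots_eq_neg_add_and_eq_mul B C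
  rw [forall_quadratic_root_iff (fun v : ℂ => v.re < 0), neg_and_neg_iff_add_neg_and_mul_pos,
    Complex.neg_re, neg_pos, Complex.add_re]
  exact and_congr_right fun hsum => (bilharzDet_neg_add_mul_pos_iff hsum.ne).symm

theorem bilharzDet_low_frequency (η ξ K μ : ℝ) :
    bilharzDet (((η ^ 2 * (1 + K - μ) : ℝ) : ℂ) - (ξ : ℂ) * Complex.I)
        (((η ^ 4 * K : ℝ) : ℂ) - (ξ : ℂ) * ((η ^ 2 : ℝ) : ℂ) * Complex.I) =
      η ^ 4 * (η ^ 4 * K * (1 + K - μ) ^ 2 - ξ ^ 2 * (μ - K)) := by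
  simp only [bilharzDet, ← Complex.ofReal_mul, Complex.sub_re, Complex.sub_im, Complex.ofReal_re,
    Complex.ofReal_im, Complex.re_ofReal_mul, Complex.im_ofReal_mul, Complex.I_re, Complex.I_im]
  ring

theorem low_frequency_quadratic_stability_general {η ξ K μ β : ℝ} (hη : η ≠ 0)
    (hβ : β = 1 + K - μ) :
    (∀ z : ℂ,
        z ^ 2 + (((η ^ 2 * β : ℝ) : ℂ) - (ξ : ℂ) * Complex.I) * z
          + (((η ^ 4 * K : ℝ) : ℂ) - (ξ : ℂ) * ((η ^ 2 : ℝ) : ℂ) * Complex.I)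
          = 0 → z.re < 0) ↔
      (0 < β ∧ ξ ^ 2 * (μ - K) < η ^ 4 * K * β ^ 2) := by
  subst hβ
  have hη2 : 0 < η ^ 2 := by positivity
  have hη4 : 0 < η ^ 4 := by positivity
  rw [forall_quadratic_root_re_neg_iff, bilharzDet_low_frequency, mul_pos_iff_of_pos_left hη4,
    sub_pos, Complex.sub_re, Complex.ofReal_re, Complex.re_ofReal_mul, Complex.I_re, mul_zero,
    sub_zero, mul_pos_iff_of_pos_left hη2]

/-- Low-frequency dispersion relation: both roots of the complex quadratic
`p(z) = z² + (η̄²β − iξ̄)z + (η̄⁴K̄ − iξ̄η̄²)`, with `β = 1 + K̄ − μ`, have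
strictly negative real part iff `β > 0` and `η̄⁴ K̄ β² > ξ̄² (μ − K̄)`. -/
theorem low_frequency_quadratic_stability (ηb ξb Kb μ β : ℝ)
    (hηb : 0 < ηb) (hKb : 0 ≤ Kb) (hμ : 0 < μ) (hβ : β = 1 + Kb - μ) :
    (∀ z : ℂ,
        z ^ 2 + (((ηb ^ 2 * β : ℝ) : ℂ) - (ξb : ℂ) * Complex.I) * z
          + (((ηb ^ 4 * Kb : ℝ) : ℂ) - (ξb : ℂ) * ((ηb ^ 2 : ℝ) : ℂ) * Complex.I)
          = 0 → z.re < 0) ↔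
      (0 < β ∧ ξb ^ 2 * (μ - Kb) < ηb ^ 4 * Kb * β ^ 2) :=
  low_frequency_quadratic_stability_general hηb.ne' hβ
end

section
/- Fix positive reals α, h̄, c̄, ρ̄_s, s, e, m, n, T = tanθ and assume K > 0. Then there exists R > 0 such that for every (ξ,η) ∈ ℝ² with ξ² + η² ≥ R, every eigenvalue of A(ξ,η) has strictly negative real part. In particular, the set of frequencies at which the linearized system is spectrally unstable is bounded. -/
/-!
By Gershgorin's theorem, applied after a diagonal change of variables, all eigenvalues have
negative real part as soon as, for some positive weights, the real part of each diagonal entry is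
negative and outweighs the rest of its row. Transport contributes only imaginary parts to the
diagonal, so diffusion makes the real part of order `-(ξ² + η²)` in the rows of the fluid height
and the terrain, whereas the row of the sediment has only the constant damping `-a`, against
off-diagonal entries of order `|ξ|`. A sediment weight of order `1 + |ξ|` repairs this row, and
costs only `O(1 + |ξ|)` in the others because sediment enters them without derivatives.
-/

open Finset Matrix

/-- The Fourier symbol `A₀ + iξ·A₁ − p·A₂` of a linear system with real coefficient matrices, in
which `A₁` acts on the first-order derivative with frequency `ξ` and `A₂` on a Laplacian whose
frequency vector has squared length `p`; `ξ` and `p` are kept as independent variables. -/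
noncomputable def fourierSymbol {ι : Type*} (A₀ A₁ A₂ : Matrix ι ι ℝ) (ξ p : ℝ) : Matrix ι ι ℂ :=
  A₀.map Complex.ofReal + (Complex.I * (ξ : ℂ)) • A₁.map Complex.ofReal -
    (p : ℂ) • A₂.map Complex.ofReal

lemma norm_fourierSymbol_apply_le {ι : Type*} (A₀ A₁ A₂ : Matrix ι ι ℝ) (ξ p : ℝ) (i j : ι) :
    ‖fourierSymbol A₀ A₁ A₂ ξ p i j‖ ≤ |A₀ i j| + |ξ| * |A₁ i j| + |p| * |A₂ i j| := by
  have h := (norm_sub_le ((A₀ i j : ℂ) + Complex.I * ξ * A₁ i j) (p * A₂ i j)).trans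
    (add_le_add_left (norm_add_le _ _) _)
  simpa [fourierSymbol] using h

lemma re_fourierSymbol_apply {ι : Type*} (A₀ A₁ A₂ : Matrix ι ι ℝ) (ξ p : ℝ) (i j : ι) :
    (fourierSymbol A₀ A₁ A₂ ξ p i j).re = A₀ i j - p * A₂ i j := by
  simp [fourierSymbol]

lemma re_lt_zero_of_weighted_sum_row_lt_neg_re_diag {ι : Type*} [Fintype ι] [DecidableEq ι]
    {M : Matrix ι ι ℂ} {d : ι → ℝ} (hd : ∀ k, 0 ≤ d k)
    (hM : ∀ k, ∑ j ∈ univ.erase k, ‖M k j‖ * d j < -(M k k).re * d k)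
    {z : ℂ} (hz : M.charpoly.IsRoot z) : z.re < 0 := by
  by_contra! hz_re
  have hdet : ((scalar ι z - M) * diagonal fun k ↦ (d k : ℂ)).det = 0 := by
    rw [det_mul, ← eval_charpoly, hz.eq_zero, zero_mul]
  refine det_ne_zero_of_sum_row_lt_diag (fun k ↦ ?_) hdet
  calc ∑ j ∈ univ.erase k, ‖((scalar ι z - M) * diagonal fun k ↦ (d k : ℂ)) k j‖
      = ∑ j ∈ univ.erase k, ‖M k j‖ * d j :=
        sum_congr rfl fun j hj ↦ by
          simp [(ne_of_mem_erase hj).symm, abs_of_nonneg (hd j)]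
    _ < -(M k k).re * d k := hM k
    _ ≤ (z - M k k).re * d k := by
        gcongr
        · exact hd k
        · simpa using hz_re
    _ ≤ ‖z - M k k‖ * d k := mul_le_mul_of_nonneg_right (Complex.re_le_norm _) (hd k)
    _ = ‖((scalar ι z - M) * diagonal fun k ↦ (d k : ℂ)) k k‖ := by
        simp [abs_of_nonneg (hd k)]

lemma re_lt_zero_of_fourierSymbol_weighted_sum_row_lt {ι : Type*} [Fintype ι] [DecidableEq ι]
    {A₀ A₁ A₂ : Matrix ι ι ℝ} {ξ p : ℝ} {d : ι → ℝ} (hd : ∀ k, 0 ≤ d k)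
    (h : ∀ k, ∑ j ∈ univ.erase k, (|A₀ k j| + |ξ| * |A₁ k j| + |p| * |A₂ k j|) * d j <
      (p * A₂ k k - A₀ k k) * d k)
    {z : ℂ} (hz : (fourierSymbol A₀ A₁ A₂ ξ p).charpoly.IsRoot z) : z.re < 0 := by
  refine re_lt_zero_of_weighted_sum_row_lt_neg_re_diag hd (fun k ↦ ?_) hz
  rw [re_fourierSymbol_apply, neg_sub]
  exact (sum_le_sum fun j _ ↦ mul_le_mul_of_nonneg_right
    (norm_fourierSymbol_apply_le A₀ A₁ A₂ ξ p k j) (hd j)).trans_lt (h k)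

lemma exists_forall_add_mul_abs_lt_mul_sq_add_sq (C₀ C₁ : ℝ) {K : ℝ} (hK : 0 < K) :
    ∃ R : ℝ, 0 < R ∧ ∀ x y : ℝ, R ≤ x ^ 2 + y ^ 2 → C₀ + C₁ * |x| < K * (x ^ 2 + y ^ 2) := by
  refine ⟨((|C₀| + |C₁|) / K + 1) ^ 2, by positivity, fun x y hR ↦ ?_⟩
  set ρ := √(x ^ 2 + y ^ 2)
  have hxρ : |x| ≤ ρ := Real.abs_le_sqrt (le_add_of_nonneg_right (sq_nonneg y))
  have hρ : (|C₀| + |C₁|) / K + 1 ≤ ρ := Real.le_sqrt_of_sq_le hR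
  have hρ_one : 1 ≤ ρ := (le_add_of_nonneg_left (by positivity)).trans hρ
  have hKρ : |C₀| + |C₁| < K * ρ := (div_lt_iff₀' hK).1 ((lt_add_one _).trans_le hρ)
  calc C₀ + C₁ * |x| ≤ |C₀| * ρ + |C₁| * ρ :=
        add_le_add ((le_abs_self C₀).trans (le_mul_of_one_le_right (abs_nonneg _) hρ_one))
          (mul_le_mul (le_abs_self C₁) hxρ (abs_nonneg x) (abs_nonneg C₁))
    _ = (|C₀| + |C₁|) * ρ := (add_mul _ _ _).symm
    _ < K * ρ * ρ := by gcongr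
    _ = K * (x ^ 2 + y ^ 2) := by rw [mul_assoc, Real.mul_self_sqrt (by positivity)]

lemma isBounded_of_sq_add_sq_le {S : Set (ℝ × ℝ)} {R : ℝ}
    (hS : ∀ x ∈ S, x.1 ^ 2 + x.2 ^ 2 ≤ R) : Bornology.IsBounded S := by
  refine (Metric.isBounded_closedBall (x := (0 : ℝ × ℝ)) (r := √R)).subset fun x hx ↦ ?_
  rw [mem_closedBall_zero_iff, Prod.norm_def]
  exact max_le (Real.abs_le_sqrt (by linarith [hS x hx, sq_nonneg x.2]))
    (Real.abs_le_sqrt (by linarith [hS x hx, sq_nonneg x.1]))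

section PartialDiffusion

variable {A₀ A₁ : Matrix (Fin 3) (Fin 3) ℝ} {q r K : ℝ}

lemma re_lt_zero_of_partialDiffusion_weights (hA₁₀ : A₁ 0 1 = 0) (hA₁₂ : A₁ 2 1 = 0)
    {ξ p d₀ d₁ : ℝ} (hp : 0 ≤ p) (hd₀ : 0 ≤ d₀) (hd₁ : 0 ≤ d₁)
    (row₀ : |A₀ 0 1| * d₁ + (|A₀ 0 2| + |ξ| * |A₁ 0 2| + p * |r|) < (p * q - A₀ 0 0) * d₀)
    (row₁ : (|A₀ 1 0| + |ξ| * |A₁ 1 0|) * d₀ + (|A₀ 1 2| + |ξ| * |A₁ 1 2|) < -A₀ 1 1 * d₁)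
    (row₂ : (|A₀ 2 0| + |ξ| * |A₁ 2 0|) * d₀ + |A₀ 2 1| * d₁ < p * K - A₀ 2 2)
    {z : ℂ}
    (hz : (fourierSymbol A₀ A₁ !![q, 0, r; 0, 0, 0; 0, 0, K] ξ p).charpoly.IsRoot z) :
    z.re < 0 := by
  refine re_lt_zero_of_fourierSymbol_weighted_sum_row_lt (d := ![d₀, d₁, 1]) ?_ ?_ hz
  · simp [Fin.forall_fin_succ, hd₀, hd₁]
  · have erase₀ : (univ : Finset (Fin 3)).erase 0 = {1, 2} := rfl
    have erase₁ : (univ : Finset (Fin 3)).erase 1 = {0, 2} := rfl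
    have erase₂ : (univ : Finset (Fin 3)).erase 2 = {0, 1} := rfl
    intro k
    fin_cases k
    · simpa [erase₀, hA₁₀, abs_of_nonneg hp] using row₀
    · simpa [erase₁] using row₁
    · simpa [erase₂, hA₁₂] using row₂

lemma exists_radius_re_lt_zero_of_partialDiffusion (hA₀ : A₀ 1 1 < 0) (hA₁₀ : A₁ 0 1 = 0)
    (hA₁₂ : A₁ 2 1 = 0) (hq : 0 < q) (hK : 0 < K) :
    ∃ R : ℝ, 0 < R ∧ ∀ ξ η : ℝ, R ≤ ξ ^ 2 + η ^ 2 → ∀ z : ℂ,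
      (fourierSymbol A₀ A₁ !![q, 0, r; 0, 0, 0; 0, 0, K] ξ (ξ ^ 2 + η ^ 2)).charpoly.IsRoot z →
        z.re < 0 := by
  have ha : 0 < -A₀ 1 1 := neg_pos.2 hA₀
  -- Since `q d₀ = |r| + 1`, the diffusion part of the first row keeps a margin `ξ² + η²`.
  let d₀ := (|r| + 1) / q
  -- The second weight is `u + v |ξ|`; the summand `1` in `u` makes the second row strict.
  let u := (|A₀ 1 0| * d₀ + |A₀ 1 2| + 1) / -A₀ 1 1
  let v := (|A₁ 1 0| * d₀ + |A₁ 1 2|) / -A₀ 1 1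
  have hd₀ : q * d₀ = |r| + 1 := mul_div_cancel₀ _ hq.ne'
  have hu : -A₀ 1 1 * u = |A₀ 1 0| * d₀ + |A₀ 1 2| + 1 := mul_div_cancel₀ _ ha.ne'
  have hv : -A₀ 1 1 * v = |A₁ 1 0| * d₀ + |A₁ 1 2| := mul_div_cancel₀ _ ha.ne'
  obtain ⟨R₀, hR₀, large₀⟩ := exists_forall_add_mul_abs_lt_mul_sq_add_sq
    (|A₀ 0 1| * u + |A₀ 0 2| + A₀ 0 0 * d₀) (|A₀ 0 1| * v + |A₁ 0 2|) one_pos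
  obtain ⟨R₂, -, large₂⟩ := exists_forall_add_mul_abs_lt_mul_sq_add_sq
    (|A₀ 2 0| * d₀ + |A₀ 2 1| * u + A₀ 2 2) (|A₁ 2 0| * d₀ + |A₀ 2 1| * v) hK
  refine ⟨max R₀ R₂, lt_max_of_lt_left hR₀, fun ξ η hR z hz ↦ ?_⟩
  have bound₀ := large₀ ξ η (le_of_max_le_left hR)
  have bound₂ := large₂ ξ η (le_of_max_le_right hR)
  refine re_lt_zero_of_partialDiffusion_weights hA₁₀ hA₁₂ (d₀ := d₀) (d₁ := u + v * |ξ|)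
    (by positivity) (by positivity) (by positivity) ?_ ?_ ?_ hz
  · linear_combination bound₀ - (ξ ^ 2 + η ^ 2) * hd₀
  · linear_combination zero_lt_one (α := ℝ) - hu - |ξ| * hv
  · linear_combination bound₂

theorem high_frequency_stability_creep_pos_general (hA₀ : A₀ 1 1 < 0) (hA₁₀ : A₁ 0 1 = 0)
    (hA₁₂ : A₁ 2 1 = 0) (hq : 0 < q) (hK : 0 < K) :
    ∃ R : ℝ, 0 < R ∧
      (∀ ξ η : ℝ, R ≤ ξ ^ 2 + η ^ 2 → ∀ z : ℂ,
        (fourierSymbol A₀ A₁ !![q, 0, r; 0, 0, 0; 0, 0, K] ξ (ξ ^ 2 + η ^ 2)).charpoly.IsRoot z →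
          z.re < 0) ∧
      Bornology.IsBounded {x : ℝ × ℝ | ∃ z : ℂ,
        (fourierSymbol A₀ A₁ !![q, 0, r; 0, 0, 0; 0, 0, K]
          x.1 (x.1 ^ 2 + x.2 ^ 2)).charpoly.IsRoot z ∧ 0 ≤ z.re} := by
  obtain ⟨R, hR, stable⟩ := exists_radius_re_lt_zero_of_partialDiffusion hA₀ hA₁₀ hA₁₂ hq hK
  refine ⟨R, hR, stable, isBounded_of_sq_add_sq_le (R := R) ?_⟩
  rintro x ⟨z, hz, hz_re⟩
  by_contra! hx
  exact (stable x.1 x.2 hx.le z hz).not_ge hz_re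

end PartialDiffusion

/-- For `K > 0`, all eigenvalues of `A(ξ,η)` have strictly negative real part
once `ξ² + η²` is large enough; in particular the set of spectrally unstable
frequencies is bounded. -/
theorem high_frequency_stability_creep_pos (α hb cb ρs s e m n T K : ℝ)
    (hα : 0 < α) (hhb : 0 < hb) (hcb : 0 < cb) (hρs : 0 < ρs)
    (hs : 0 < s) (he : 0 < e) (hm : 0 < m) (hn : 0 < n) (hT : 0 < T)
    (hK : 0 < K) :
    ∃ R : ℝ, 0 < R ∧
      (∀ ξ η : ℝ, R ≤ ξ ^ 2 + η ^ 2 →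
        ∀ z : ℂ, (landA α hb cb ρs s e m n T K ξ η).charpoly.IsRoot z →
          z.re < 0) ∧
      Bornology.IsBounded {p : ℝ × ℝ | ∃ z : ℂ,
        (landA α hb cb ρs s e m n T K p.1 p.2).charpoly.IsRoot z ∧ 0 ≤ z.re} := by
  exact high_frequency_stability_creep_pos_general (neg_lt_zero.2 (by positivity)) rfl rfl
    (by positivity) hK
end
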